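/- For every integer n ≥ 2, Kac's random walk kernel K on SO(n) is √(1 − 1/C(n,2))-Lipschitz in the L² Wasserstein metric for the intrinsic metric D: for all probability measures μ, ν on SO(n), W_{D,2}(μK, νK) ≤ √(1 − 1/C(n,2)) · W_{D,2}(μ, ν). -/

import Mathlib

open MeasureTheory ENNReal Filter Topology Matrix

noncomputable section

/-- The (Borel) product measurable structure on matrices. -/
instance matrixMeasurableSpace {m n R : Type*} [MeasurableSpace R] :
    MeasurableSpace (Matrix m n R) :=
  (inferInstance : MeasurableSpace (m → n → R))

/-- `η` is a coupling of `μ` and `ν`: its two marginals are `μ` and `ν`. -/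
def IsCoupling {X : Type*} [MeasurableSpace X] (η : Measure (X × X)) (μ ν : Measure X) : Prop :=
  η.map Prod.fst = μ ∧ η.map Prod.snd = ν

/-- The `L^p` transportation cost (Wasserstein) distance associated with the distance
function `d`, with values in `ℝ≥0∞`:
`W_{d,p}(μ,ν) = inf { (∫ d(x,y)^p dη)^{1/p} : η a coupling of (μ,ν) }`. -/
def wassersteinE {X : Type*} [MeasurableSpace X] (d : X → X → ℝ≥0∞) (p : ℝ)
    (μ ν : Measure X) : ℝ≥0∞ :=
  ⨅ (η : Measure (X × X)) (_ : IsCoupling η μ ν), (∫⁻ z, d z.1 z.2 ^ p ∂η) ^ (1 / p)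

/-- The length of the curve `γ` over `[0,1]`, w.r.t. the distance function `d`:
the supremum, over all partitions `0 = t 0 ≤ t 1 ≤ ⋯ ≤ t k = 1` of `[0,1]`, of the sums of
the distances between consecutive points of the curve. -/
def pathLengthE {X : Type*} (d : X → X → ℝ≥0∞) (γ : ℝ → X) : ℝ≥0∞ :=
  ⨆ (k : ℕ) (t : Fin (k + 1) → ℝ) (_ : Monotone t) (_ : t 0 = 0) (_ : t (Fin.last k) = 1),
    ∑ i : Fin k, d (γ (t i.castSucc)) (γ (t i.succ))

/-- The intrinsic (length) distance on the set `S` induced by the distance function `d`: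
the infimum of `d`-lengths of continuous paths joining `a` to `b` inside `S`. -/
def intrinsicDistE {X : Type*} [TopologicalSpace X] (d : X → X → ℝ≥0∞) (S : Set X)
    (a b : X) : ℝ≥0∞ :=
  ⨅ (γ : ℝ → X) (_ : ContinuousOn γ (Set.Icc 0 1)) (_ : Set.MapsTo γ (Set.Icc 0 1) S)
    (_ : γ 0 = a) (_ : γ 1 = b), pathLengthE d γ

/-- `t` iterated steps of the Markov transition kernel `P`, started from the initial
distribution `μ` (so `kernelIterate P t μ = μP^t`). -/
def kernelIterate {X : Type*} [MeasurableSpace X] (P : X → Measure X) :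
    ℕ → Measure X → Measure X
  | 0, μ => μ
  | t + 1, μ => (kernelIterate P t μ).bind P

/-- A Haar probability measure for the multiplicative set `S`, viewed as a measure on the
ambient space: a probability measure carried by `S` that is invariant under left and right
translations by all elements of `S`. -/
def IsHaarLike {X : Type*} [MeasurableSpace X] [Mul X] (S : Set X) (μ : Measure X) : Prop :=
  IsProbabilityMeasure μ ∧ μ Sᶜ = 0 ∧
    ∀ a ∈ S, μ.map (fun x => a * x) = μ ∧ μ.map (fun x => x * a) = μ

/-- The Haar probability measure of a compact matrix group `S` (such as `SO(n)` or `U(n)`),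
viewed as a measure on the ambient matrix space.  For such `S` a translation-invariant
probability measure exists and is unique, so `haarLike S` is *the* Haar probability
measure of `S`. -/
def haarLike {X : Type*} [MeasurableSpace X] [Mul X] (S : Set X) : Measure X := by
  classical exact if h : ∃ μ, IsHaarLike S μ then h.choose else 0

/-- The set of pairs `1 ≤ i < j ≤ n` of indices. -/
def pairs (n : ℕ) : Finset (Fin n × Fin n) :=
  Finset.univ.filter fun p => p.1 < p.2

/-- The special orthogonal group `SO(n)`, as a subset of the `n × n` real matrices. -/
def SO (n : ℕ) : Set (Matrix (Fin n) (Fin n) ℝ) :=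
  {a | a * aᵀ = 1 ∧ a.det = 1}

/-- The Hilbert–Schmidt (Frobenius) distance `‖a - b‖_hs = √(Tr((a-b)ᵀ(a-b)))` between real
matrices, as an `ℝ≥0∞`-valued distance function. -/
def hsDist {n : ℕ} (a b : Matrix (Fin n) (Fin n) ℝ) : ℝ≥0∞ :=
  ENNReal.ofReal (Real.sqrt (Matrix.trace ((a - b)ᵀ * (a - b))))

/-- The intrinsic (Riemannian/length) metric `D` on `SO(n)` induced by the Hilbert–Schmidt
norm: the infimum of `hs`-lengths of continuous paths inside `SO(n)`. -/
def DSO (n : ℕ) (a b : Matrix (Fin n) (Fin n) ℝ) : ℝ≥0∞ :=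
  intrinsicDistE hsDist (SO n) a b

/-- The rotation `R(i,j,θ)` by the angle `θ` of the plane spanned by the `i`-th and `j`-th
canonical basis vectors: `R e_i = cos θ e_i + sin θ e_j`, `R e_j = cos θ e_j - sin θ e_i`,
and `R e_k = e_k` for `k ∉ {i,j}`. -/
def kacRot {n : ℕ} (i j : Fin n) (θ : ℝ) : Matrix (Fin n) (Fin n) ℝ :=
  Matrix.of fun k l =>
    if k = i ∧ l = i then Real.cos θ
    else if k = j ∧ l = i then Real.sin θ
    else if k = i ∧ l = j then -Real.sin θ
    else if k = j ∧ l = j then Real.cos θ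
    else if k = l then 1 else 0

/-- The uniform probability measure on the angle interval `[0, 2π]`. -/
def uniformAngle : Measure ℝ :=
  (ENNReal.ofReal (2 * Real.pi))⁻¹ • MeasureTheory.volume.restrict (Set.Icc 0 (2 * Real.pi))

/-- The transition kernel of Kac's random walk on `SO(n)`:
`K_x = (1/(2π·C(n,2))) ∑_{1≤i<j≤n} ∫₀^{2π} δ_{R(i,j,θ)·x} dθ`. -/
def kacKernel (n : ℕ) (x : Matrix (Fin n) (Fin n) ℝ) : Measure (Matrix (Fin n) (Fin n) ℝ) :=
  (n.choose 2 : ℝ≥0∞)⁻¹ •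
    ∑ p ∈ pairs n, uniformAngle.map fun θ => kacRot p.1 p.2 θ * x

/-!
The rotations of a fixed coordinate plane act on `SO(n)` by `D`-isometries, so the distance
`planeDist i j` between the orbits of two points satisfies the triangle inequality. By Minkowski's
inequality so does the `ℓ²` combination `kacDist` of these distances over the `N = C(n,2)`
coordinate planes.

For a fixed pair of close points `x`, `y`, rotating `y` optimally in the plane `(i, j)` cancels the
`(i, j)`-component of the antisymmetric part of `x yᵀ`. Summed over all planes this removes, to
leading order, the whole of `‖x - y‖²` once, whence `kacDist² ≤ (N - 1 + o(1)) ‖x - y‖²`. Such an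
infinitesimal Lipschitz bound integrates along paths to `kacDist² ≤ (N - 1) D²`.

Couple two Kac walks at `x` and `y` by rotating the same random plane, the second walk using an
angle shifted by a measurable, nearly optimal amount; the shift does not change the law of the
angle. The expected squared distance after the step is then at most
`N⁻¹ kacDist² ≤ (1 - N⁻¹) D(x, y)²`, up to an arbitrarily small error.
-/

/-! ### Length metrics -/

section LengthMetric

variable {X : Type*}

theorem sum_range_le_pathLengthE (d : X → X → ℝ≥0∞) (γ : ℝ → X) {t : ℕ → ℝ} {k : ℕ}
    (ht : Monotone t) (h0 : t 0 = 0) (hk : t k = 1) :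
    ∑ i ∈ Finset.range k, d (γ (t i)) (γ (t (i + 1))) ≤ pathLengthE d γ := by
  rw [← Fin.sum_univ_eq_sum_range (fun i => d (γ (t i)) (γ (t (i + 1))))]
  exact le_iSup_of_le k <| le_iSup_of_le (fun i => t i) <|
    le_iSup_of_le (fun i j hij => ht hij) <| le_iSup_of_le h0 <| le_iSup_of_le hk le_rfl

variable [PseudoEMetricSpace X] {S : Set X} {a b c : X}

theorem pathLengthE_edist_le_eVariationOn (γ : ℝ → X) :
    pathLengthE edist γ ≤ eVariationOn γ (Set.Icc 0 1) := by
  refine iSup_le fun k => iSup_le fun t => iSup_le fun ht => iSup_le fun h0 => iSup_le fun h1 => ?_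
  let u : ℕ → ℝ := fun i => t ⟨min i k, by lia⟩
  have hu : Monotone u := fun i j hij => ht (by simp only [Fin.mk_le_mk]; lia)
  have hmem (i) : u i ∈ Set.Icc (0 : ℝ) 1 := ⟨h0 ▸ ht (Fin.zero_le _), h1 ▸ ht (Fin.le_last _)⟩
  have hcast (i : Fin k) : t i.castSucc = u i := by
    congr 1; ext; simp
  have hsucc (i : Fin k) : t i.succ = u (i + 1) := by
    congr 1; ext; simp
  calc ∑ i : Fin k, edist (γ (t i.castSucc)) (γ (t i.succ))
      = ∑ i ∈ Finset.range k, edist (γ (u (i + 1))) (γ (u i)) := by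
        rw [← Fin.sum_univ_eq_sum_range (fun i => edist (γ (u (i + 1))) (γ (u i))) k]
        simp only [hcast, hsucc, edist_comm]
    _ ≤ eVariationOn γ (Set.Icc 0 1) := eVariationOn.sum_le hu hmem

theorem eVariationOn_le_pathLengthE_edist (γ : ℝ → X) :
    eVariationOn γ (Set.Icc 0 1) ≤ pathLengthE edist γ := by
  refine iSup_le fun ⟨m, u, hu, hmem⟩ => ?_
  -- Add the endpoints `0` and `1` to the partition `u 0 ≤ ⋯ ≤ u m`.
  let v : ℕ → ℝ := fun i => if i = 0 then 0 else if i ≤ m + 1 then u (i - 1) else 1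
  have hv : Monotone v := monotone_nat_of_le_succ fun i => by
    have hI := hmem (i - 1)
    have hJ := hmem i
    have hIJ : u (i - 1) ≤ u i := hu (by lia)
    simp only [v, Nat.add_sub_cancel]
    split_ifs <;> first | lia | linarith [hI.1, hI.2, hJ.1, hJ.2]
  have hvu (i) (hi : i ≤ m) : v (i + 1) = u i := by simp [v, hi]
  calc ∑ i ∈ Finset.range m, edist (γ (u (i + 1))) (γ (u i))
      = ∑ i ∈ Finset.range m, edist (γ (v (i + 1))) (γ (v (i + 1 + 1))) := by
        refine Finset.sum_congr rfl fun i hi => ?_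
        have him := Finset.mem_range.1 hi
        rw [hvu i him.le, hvu (i + 1) him, edist_comm]
    _ ≤ ∑ i ∈ Finset.range (m + 1), edist (γ (v i)) (γ (v (i + 1))) := by
        rw [Finset.sum_range_succ']
        exact le_self_add
    _ ≤ ∑ i ∈ Finset.range (m + 2), edist (γ (v i)) (γ (v (i + 1))) := by
        rw [Finset.sum_range_succ _ (m + 1)]
        exact le_self_add
    _ ≤ pathLengthE edist γ := sum_range_le_pathLengthE edist γ hv (by simp [v]) (by simp [v])

theorem pathLengthE_edist (γ : ℝ → X) :
    pathLengthE edist γ = eVariationOn γ (Set.Icc 0 1) :=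
  (pathLengthE_edist_le_eVariationOn γ).antisymm (eVariationOn_le_pathLengthE_edist γ)

theorem le_intrinsicDistE_iff {r : ℝ≥0∞} :
    r ≤ intrinsicDistE edist S a b ↔ ∀ γ : ℝ → X, ContinuousOn γ (Set.Icc 0 1) →
      Set.MapsTo γ (Set.Icc 0 1) S → γ 0 = a → γ 1 = b → r ≤ eVariationOn γ (Set.Icc 0 1) := by
  simp only [intrinsicDistE, le_iInf_iff, pathLengthE_edist]

theorem intrinsicDistE_le_eVariationOn {u v : ℝ} (huv : u ≤ v) {γ : ℝ → X}
    (hγ : ContinuousOn γ (Set.Icc u v)) (hS : Set.MapsTo γ (Set.Icc u v) S)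
    (hu : γ u = a) (hv : γ v = b) :
    intrinsicDistE edist S a b ≤ eVariationOn γ (Set.Icc u v) := by
  let φ : ℝ → ℝ := fun t => u + (v - u) * t
  have hφ : Monotone φ := fun s t hst => by
    have := mul_le_mul_of_nonneg_left hst (sub_nonneg.2 huv)
    simpa [φ] using this
  have hmaps : Set.MapsTo φ (Set.Icc 0 1) (Set.Icc u v) := fun t ht =>
    ⟨by simpa [φ] using hφ ht.1, by simpa [φ] using hφ ht.2⟩
  exact (le_intrinsicDistE_iff.1 le_rfl (γ ∘ φ) (hγ.comp (by fun_prop) hmaps) (hS.comp hmaps)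
    (by simpa [φ] using hu) (by simpa [φ] using hv)).trans
    (eVariationOn.comp_le_of_monotoneOn _ _ (hφ.monotoneOn _) hmaps)

theorem intrinsicDistE_le_of_lipschitzWith {K : NNReal} {γ : ℝ → X} (hγ : LipschitzWith K γ)
    (hS : Set.MapsTo γ (Set.Icc 0 1) S) : intrinsicDistE edist S (γ 0) (γ 1) ≤ K :=
  calc intrinsicDistE edist S (γ 0) (γ 1)
      ≤ eVariationOn γ (Set.Icc 0 1) :=
        intrinsicDistE_le_eVariationOn zero_le_one hγ.continuous.continuousOn hS rfl rfl
    _ ≤ K * eVariationOn (id : ℝ → ℝ) (Set.Icc 0 1) :=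
        (hγ.lipschitzOnWith (s := Set.univ)).comp_eVariationOn_le fun _ _ => trivial
    _ = K := by simp

theorem intrinsicDistE_self (ha : a ∈ S) : intrinsicDistE edist S a a = 0 := by
  refine le_antisymm ((intrinsicDistE_le_eVariationOn (γ := fun _ => a) (zero_le_one' ℝ)
    continuousOn_const (fun _ _ => ha) rfl rfl).trans_eq ?_) zero_le
  exact eVariationOn.constant_on (Set.subsingleton_singleton.anti (Set.image_subset_iff.2
    fun _ _ => Set.mem_singleton a))

theorem intrinsicDistE_comm : intrinsicDistE edist S a b = intrinsicDistE edist S b a := by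
  suffices h : ∀ a b : X, intrinsicDistE edist S a b ≤ intrinsicDistE edist S b a from
    (h a b).antisymm (h b a)
  refine fun a b => le_intrinsicDistE_iff.2 fun γ hγ hS h0 h1 => ?_
  have hmaps : Set.MapsTo (fun t : ℝ => 1 - t) (Set.Icc 0 1) (Set.Icc 0 1) := fun t ht =>
    ⟨by linarith [ht.2], by linarith [ht.1]⟩
  refine (intrinsicDistE_le_eVariationOn (γ := γ ∘ fun t => 1 - t) zero_le_one
    (hγ.comp (by fun_prop) hmaps) (hS.comp hmaps) (by simpa using h1) (by simpa using h0)).trans ?_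
  exact eVariationOn.comp_le_of_antitoneOn _ _ (fun x _ y _ h => sub_le_sub_left h 1) hmaps

theorem intrinsicDistE_le_eVariationOn_add {γ₁ γ₂ : ℝ → X}
    (hγ₁ : ContinuousOn γ₁ (Set.Icc 0 1)) (hS₁ : Set.MapsTo γ₁ (Set.Icc 0 1) S)
    (hγ₂ : ContinuousOn γ₂ (Set.Icc 0 1)) (hS₂ : Set.MapsTo γ₂ (Set.Icc 0 1) S)
    (h : γ₁ 1 = γ₂ 0) :
    intrinsicDistE edist S (γ₁ 0) (γ₂ 1) ≤
      eVariationOn γ₁ (Set.Icc 0 1) + eVariationOn γ₂ (Set.Icc 0 1) := by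
  let γ : ℝ → X := fun t => if t ≤ 1 then γ₁ t else γ₂ (t - 1)
  have heq₁ : Set.EqOn γ γ₁ (Set.Icc 0 1) := fun t ht => if_pos ht.2
  have heq₂ : Set.EqOn γ (γ₂ ∘ fun t => t - 1) (Set.Icc 1 2) := by
    intro t ht
    rcases ht.1.eq_or_lt with rfl | ht
    · simp [γ, h]
    · exact if_neg ht.not_ge
  have hmaps : Set.MapsTo (fun t : ℝ => t - 1) (Set.Icc 1 2) (Set.Icc 0 1) := fun t ht =>
    ⟨by linarith [ht.1], by linarith [ht.2]⟩
  have hunion : Set.Icc (0 : ℝ) 2 = Set.Icc 0 1 ∪ Set.Icc 1 2 :=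
    (Set.Icc_union_Icc_eq_Icc zero_le_one one_le_two).symm
  have hcont : ContinuousOn γ (Set.Icc 0 2) := hunion ▸
    (hγ₁.congr heq₁).union_of_isClosed ((hγ₂.comp (by fun_prop) hmaps).congr heq₂)
      isClosed_Icc isClosed_Icc
  have hS : Set.MapsTo γ (Set.Icc 0 2) S := hunion ▸
    (hS₁.congr heq₁.symm).union ((hS₂.comp hmaps).congr heq₂.symm)
  have hadd : eVariationOn γ (Set.Icc 0 1) + eVariationOn γ (Set.Icc 1 2) =
      eVariationOn γ (Set.Icc 0 2) := by
    simpa using eVariationOn.Icc_add_Icc γ (s := Set.univ) zero_le_one one_le_two trivial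
  calc intrinsicDistE edist S (γ₁ 0) (γ₂ 1)
      ≤ eVariationOn γ (Set.Icc 0 2) :=
        intrinsicDistE_le_eVariationOn zero_le_two hcont hS (by simp [γ]) (by norm_num [γ])
    _ = eVariationOn γ₁ (Set.Icc 0 1) + eVariationOn (γ₂ ∘ fun t => t - 1) (Set.Icc 1 2) := by
        rw [← hadd, eVariationOn.congr heq₁, eVariationOn.congr heq₂]
    _ ≤ eVariationOn γ₁ (Set.Icc 0 1) + eVariationOn γ₂ (Set.Icc 0 1) := by
        gcongr
        exact eVariationOn.comp_le_of_monotoneOn _ _ (fun x _ y _ hxy => sub_le_sub_right hxy 1)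
          hmaps

theorem intrinsicDistE_triangle :
    intrinsicDistE edist S a c ≤ intrinsicDistE edist S a b + intrinsicDistE edist S b c := by
  conv_rhs => unfold intrinsicDistE
  simp only [ENNReal.iInf_add, ENNReal.add_iInf, pathLengthE_edist, le_iInf_iff]
  rintro γ₂ hγ₂ hS₂ rfl rfl γ₁ hγ₁ hS₁ rfl h
  exact intrinsicDistE_le_eVariationOn_add hγ₁ hS₁ hγ₂ hS₂ h

theorem intrinsicDistE_eq_top (h : ¬(a ∈ S ∧ b ∈ S)) : intrinsicDistE edist S a b = ⊤ :=
  top_unique <| le_intrinsicDistE_iff.2 fun _ _ hS h0 h1 =>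
    (h ⟨h0 ▸ hS (by simp), h1 ▸ hS (by simp)⟩).elim

theorem intrinsicDistE_map_le_of_isometry {f : X → X} (hf : Isometry f) (hS : Set.MapsTo f S S) :
    intrinsicDistE edist S (f a) (f b) ≤ intrinsicDistE edist S a b := by
  refine le_intrinsicDistE_iff.2 fun γ hγ hγS h0 h1 => ?_
  refine (intrinsicDistE_le_eVariationOn (γ := f ∘ γ) zero_le_one
    (hf.continuous.comp_continuousOn hγ) (hS.comp hγS) (congrArg f h0) (congrArg f h1)).trans_eq ?_
  simp only [eVariationOn, Function.comp_apply, hf.edist_eq]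

/-- A subset `S` of a metric space as a type of its own, carrying the intrinsic distance of `S`
instead of the distance of the ambient space. -/
structure IntrinsicSpace (S : Set X) where
  point : X
  mem : point ∈ S

instance : PseudoEMetricSpace (IntrinsicSpace S) where
  edist a b := intrinsicDistE edist S a.point b.point
  edist_self a := intrinsicDistE_self a.mem
  edist_comm _ _ := intrinsicDistE_comm
  edist_triangle _ _ _ := intrinsicDistE_triangle

theorem IntrinsicSpace.edist_eq (a b : IntrinsicSpace S) :
    edist a b = intrinsicDistE edist S a.point b.point :=
  rfl

theorem continuousOn_intrinsicDistE
    (hS : ∀ a ∈ S, Tendsto (fun b => intrinsicDistE edist S b a) (𝓝[S] a) (𝓝 0)) :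
    ContinuousOn (fun z : X × X => intrinsicDistE edist S z.1 z.2) (S ×ˢ S) := by
  have hι : Continuous fun a : S => (⟨a, a.2⟩ : IntrinsicSpace S) :=
    continuous_iff_continuousAt.2 fun a => tendsto_iff_edist_tendsto_0.2 <|
      (tendsto_nhdsWithin_iff_subtype a.2 _ _).1 (hS a a.2)
  rw [continuousOn_iff_continuous_domRestrict]
  have hfst : Continuous fun z : ↥(S ×ˢ S) => (⟨z.1.1, z.2.1⟩ : IntrinsicSpace S) :=
    hι.comp (continuous_subtype_val.fst.subtype_mk fun z => z.2.1)
  have hsnd : Continuous fun z : ↥(S ×ˢ S) => (⟨z.1.2, z.2.2⟩ : IntrinsicSpace S) :=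
    hι.comp (continuous_subtype_val.snd.subtype_mk fun z => z.2.2)
  refine (hfst.edist hsnd).congr fun z => ?_
  rw [IntrinsicSpace.edist_eq, Set.domRestrict_apply]

section LocalToGlobal

variable {F : X → X → ℝ≥0∞} {C : ℝ≥0∞}

theorem le_mul_eVariationOn_of_locally_le
    (hF : ∀ a ∈ S, ∀ b ∈ S, ∀ c ∈ S, F a c ≤ F a b + F b c)
    (hloc : ∀ x ∈ S, ∃ U ∈ 𝓝[S] x, ∀ a ∈ U, ∀ b ∈ U, F a b ≤ C * edist a b) {γ : ℝ → X}
    (hγ : ContinuousOn γ (Set.Icc 0 1)) (hS : Set.MapsTo γ (Set.Icc 0 1) S) :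
    F (γ 0) (γ 1) ≤ C * eVariationOn γ (Set.Icc 0 1) := by
  choose! U hU hUF using hloc
  have hnhds (s : unitInterval) : {s' : unitInterval | γ s' ∈ U (γ s)} ∈ 𝓝 s :=
    (tendsto_nhdsWithin_iff_subtype s.2 _ _).1 ((hγ s s.2).tendsto_nhdsWithin hS)
      (hU _ (hS s.2))
  obtain ⟨t, ht0, ht, ⟨m, hm⟩, hcover⟩ := exists_monotone_Icc_subset_open_cover_unitInterval
    (fun s : unitInterval => isOpen_interior (s := {s' : unitInterval | γ s' ∈ U (γ s)}))
    (fun s _ => Set.mem_iUnion.2 ⟨s, mem_interior_iff_mem_nhds.2 (hnhds s)⟩)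
  have hstep (i) : F (γ (t i)) (γ (t (i + 1))) ≤ C * edist (γ (t i)) (γ (t (i + 1))) := by
    obtain ⟨s, hs⟩ := hcover i
    have hi : t i ≤ t (i + 1) := ht i.le_succ
    exact hUF _ (hS s.2) _ (interior_subset (hs (Set.left_mem_Icc.2 hi)) :)
      _ (interior_subset (hs (Set.right_mem_Icc.2 hi)) :)
  have hchain (k) : F (γ (t 0)) (γ (t k)) ≤
      C * ∑ i ∈ Finset.range k, edist (γ (t i)) (γ (t (i + 1))) := by
    induction k with
    | zero =>
      have hmem := mem_of_mem_nhdsWithin (hS (t 0).2) (hU _ (hS (t 0).2))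
      simpa using hUF _ (hS (t 0).2) _ hmem _ hmem
    | succ k ih =>
      rw [Finset.sum_range_succ, mul_add]
      exact (hF _ (hS (t 0).2) _ (hS (t k).2) _ (hS (t (k + 1)).2)).trans
        (add_le_add ih (hstep k))
  calc F (γ 0) (γ 1) = F (γ (t 0)) (γ (t m)) := by simp [ht0, hm m le_rfl]
    _ ≤ C * ∑ i ∈ Finset.range m, edist (γ (t i)) (γ (t (i + 1))) := hchain m
    _ ≤ C * eVariationOn γ (Set.Icc 0 1) := by
      gcongr
      simp only [edist_comm (γ (t _)) (γ (t (_ + 1)))]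
      exact eVariationOn.sum_le (u := fun i => (t i : ℝ)) (fun i j hij => ht hij) fun i => (t i).2

theorem le_mul_intrinsicDistE_of_locally_le (hC0 : C ≠ 0) (hC : C ≠ ⊤)
    (hF : ∀ a ∈ S, ∀ b ∈ S, ∀ c ∈ S, F a c ≤ F a b + F b c)
    (hloc : ∀ x ∈ S, ∃ U ∈ 𝓝[S] x, ∀ a ∈ U, ∀ b ∈ U, F a b ≤ C * edist a b) :
    F a b ≤ C * intrinsicDistE edist S a b := by
  rw [← ENNReal.div_le_iff' hC0 hC, le_intrinsicDistE_iff]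
  rintro γ hγ hS rfl rfl
  rw [ENNReal.div_le_iff' hC0 hC]
  exact le_mul_eVariationOn_of_locally_le hF hloc hγ hS

end LocalToGlobal

end LengthMetric

/-! ### The special orthogonal group with its intrinsic metric -/

section SpecialOrthogonal

open scoped Matrix.Norms.Frobenius

theorem frobenius_norm_sq_eq_trace {m n : Type*} [Fintype m] [Fintype n] (A : Matrix m n ℝ) :
    ‖A‖ ^ 2 = (Aᵀ * A).trace := by
  rw [frobenius_norm_def, ← Real.sqrt_eq_rpow, Real.sq_sqrt (by positivity), Finset.sum_comm]
  simp [Matrix.trace, Matrix.mul_apply, pow_two]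

theorem frobenius_norm_mul_of_transpose_mul_self {l m n : Type*} [Fintype l] [Fintype m]
    [Fintype n] [DecidableEq m] {u : Matrix l m ℝ} (hu : uᵀ * u = 1) (M : Matrix m n ℝ) :
    ‖u * M‖ = ‖M‖ := by
  rw [← sq_eq_sq₀ (norm_nonneg _) (norm_nonneg _), frobenius_norm_sq_eq_trace,
    frobenius_norm_sq_eq_trace, transpose_mul, Matrix.mul_assoc, ← Matrix.mul_assoc uᵀ, hu,
    Matrix.one_mul]

theorem frobenius_norm_mul_of_mul_transpose_self {l m n : Type*} [Fintype l] [Fintype m]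
    [Fintype n] [DecidableEq m] {u : Matrix m n ℝ} (hu : u * uᵀ = 1) (M : Matrix l m ℝ) :
    ‖M * u‖ = ‖M‖ := by
  rw [← frobenius_norm_transpose, transpose_mul,
    frobenius_norm_mul_of_transpose_mul_self (by rw [transpose_transpose, hu]),
    frobenius_norm_transpose]

variable {n : ℕ} {a b c u : Matrix (Fin n) (Fin n) ℝ}

theorem coe_specialOrthogonalGroup_eq_SO :
    (specialOrthogonalGroup (Fin n) ℝ : Set (Matrix (Fin n) (Fin n) ℝ)) = SO n :=
  Set.ext fun _ => mem_specialOrthogonalGroup_iff.trans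
    (and_congr_left' (mem_orthogonalGroup_iff _ _))

theorem mul_mem_SO (ha : a ∈ SO n) (hb : b ∈ SO n) : a * b ∈ SO n := by
  rw [← coe_specialOrthogonalGroup_eq_SO] at ha hb ⊢
  exact mul_mem ha hb

theorem transpose_mul_self_of_mem_SO (ha : a ∈ SO n) : aᵀ * a = 1 :=
  mul_eq_one_comm.1 ha.1

theorem transpose_mem_SO (ha : a ∈ SO n) : aᵀ ∈ SO n :=
  ⟨by rw [transpose_transpose, transpose_mul_self_of_mem_SO ha], by rw [det_transpose, ha.2]⟩

theorem isClosed_SO : IsClosed (SO n) :=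
  (isClosed_eq (by fun_prop) continuous_const).inter (isClosed_eq (by fun_prop) continuous_const)

theorem frobenius_norm_mul_of_mem_SO_left (hu : u ∈ SO n) (M : Matrix (Fin n) (Fin n) ℝ) :
    ‖u * M‖ = ‖M‖ :=
  frobenius_norm_mul_of_transpose_mul_self (transpose_mul_self_of_mem_SO hu) M

theorem frobenius_norm_mul_of_mem_SO_right (hu : u ∈ SO n) (M : Matrix (Fin n) (Fin n) ℝ) :
    ‖M * u‖ = ‖M‖ :=
  frobenius_norm_mul_of_mul_transpose_self hu.1 M

theorem hsDist_eq_edist :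
    (hsDist : Matrix (Fin n) (Fin n) ℝ → Matrix (Fin n) (Fin n) ℝ → ℝ≥0∞) = edist := by
  funext a b
  rw [hsDist, ← frobenius_norm_sq_eq_trace, Real.sqrt_sq (norm_nonneg _), edist_dist, dist_eq_norm]

theorem DSO_eq_intrinsicDistE : DSO n a b = intrinsicDistE edist (SO n) a b := by
  rw [DSO, hsDist_eq_edist]

theorem DSO_self (ha : a ∈ SO n) : DSO n a a = 0 :=
  DSO_eq_intrinsicDistE.trans (intrinsicDistE_self ha)

theorem DSO_triangle : DSO n a c ≤ DSO n a b + DSO n b c := by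
  simp only [DSO_eq_intrinsicDistE]
  exact intrinsicDistE_triangle

theorem DSO_eq_top (h : ¬(a ∈ SO n ∧ b ∈ SO n)) : DSO n a b = ⊤ :=
  DSO_eq_intrinsicDistE.trans (intrinsicDistE_eq_top h)

theorem DSO_mul_left_le (hu : u ∈ SO n) : DSO n (u * a) (u * b) ≤ DSO n a b := by
  simp only [DSO_eq_intrinsicDistE]
  refine intrinsicDistE_map_le_of_isometry (Isometry.of_dist_eq fun x y => ?_)
    fun x hx => mul_mem_SO hu hx
  rw [dist_eq_norm, dist_eq_norm, ← Matrix.mul_sub, frobenius_norm_mul_of_mem_SO_left hu]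

theorem DSO_mul_right_le (hu : u ∈ SO n) : DSO n (a * u) (b * u) ≤ DSO n a b := by
  simp only [DSO_eq_intrinsicDistE]
  refine intrinsicDistE_map_le_of_isometry (f := (· * u)) (Isometry.of_dist_eq fun x y => ?_)
    fun x hx => mul_mem_SO hx hu
  rw [dist_eq_norm, dist_eq_norm, ← Matrix.sub_mul, frobenius_norm_mul_of_mem_SO_right hu]

end SpecialOrthogonal

/-! ### The Cayley transform -/

section Cayley

open scoped Matrix.Norms.Frobenius

variable {ι : Type*} [Fintype ι] [DecidableEq ι] {a X Y : Matrix ι ι ℝ}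

theorem isUnit_det_one_add_of_transpose_eq_neg (hX : Xᵀ = -X) : IsUnit (1 + X).det := by
  rw [isUnit_iff_ne_zero, ne_eq, ← exists_mulVec_eq_zero_iff]
  rintro ⟨v, hv, hXv⟩
  have hskew : v ⬝ᵥ X *ᵥ v = 0 := by
    have : v ⬝ᵥ X *ᵥ v = -(v ⬝ᵥ X *ᵥ v) := by
      conv_lhs => rw [dotProduct_mulVec, ← mulVec_transpose, hX, neg_mulVec, neg_dotProduct,
        dotProduct_comm]
    linarith
  have hsum : v ⬝ᵥ (1 + X) *ᵥ v = v ⬝ᵥ v := by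
    rw [add_mulVec, one_mulVec, dotProduct_add, hskew, add_zero]
  rw [hXv, dotProduct_zero] at hsum
  exact hv (dotProduct_self_eq_zero.1 hsum.symm)

theorem frobenius_norm_le_one_add_mul (hX : Xᵀ = -X) (M : Matrix ι ι ℝ) :
    ‖M‖ ≤ ‖(1 + X) * M‖ := by
  refine le_of_sq_le_sq ?_ (norm_nonneg _)
  have h : ((1 + X) * M)ᵀ * ((1 + X) * M) = Mᵀ * M + (X * M)ᵀ * (X * M) := by
    simp only [transpose_mul, transpose_add, transpose_one, hX]
    noncomm_ring
  rw [frobenius_norm_sq_eq_trace ((1 + X) * M), h, trace_add, ← frobenius_norm_sq_eq_trace,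
    ← frobenius_norm_sq_eq_trace]
  exact le_add_of_nonneg_right (sq_nonneg _)

theorem frobenius_norm_one_add_inv_mul_le (hX : Xᵀ = -X) (M : Matrix ι ι ℝ) :
    ‖(1 + X)⁻¹ * M‖ ≤ ‖M‖ := by
  simpa only [mul_nonsing_inv_cancel_left _ M (isUnit_det_one_add_of_transpose_eq_neg hX)] using
    frobenius_norm_le_one_add_mul hX ((1 + X)⁻¹ * M)

theorem frobenius_norm_mul_one_add_inv_le (hX : Xᵀ = -X) (M : Matrix ι ι ℝ) :
    ‖M * (1 + X)⁻¹‖ ≤ ‖M‖ := by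
  have h := frobenius_norm_one_add_inv_mul_le (X := -X) (by rw [transpose_neg, hX]) Mᵀ
  rwa [← frobenius_norm_transpose, transpose_mul, transpose_nonsing_inv, transpose_add,
    transpose_one, hX, ← frobenius_norm_transpose M]

/-- The Cayley transform `(1 - X)(1 + X)⁻¹`, an involution exchanging skew-symmetric matrices and
the rotations without eigenvalue `-1`. It is written with a single occurrence of `X`, the inverse
being the junk value `0` when `1 + X` is singular. -/
def cayley (X : Matrix ι ι ℝ) : Matrix ι ι ℝ :=
  (2 : ℝ) • (1 + X)⁻¹ - 1

theorem cayley_zero : cayley (0 : Matrix ι ι ℝ) = 1 := by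
  rw [cayley, add_zero, inv_one, two_smul, add_sub_cancel_right]

theorem one_add_mul_cayley (h : IsUnit (1 + X).det) : (1 + X) * cayley X = 1 - X := by
  rw [cayley, Matrix.mul_sub, Matrix.mul_smul, mul_nonsing_inv _ h, two_smul, Matrix.mul_one]
  abel

theorem cayley_cayley (h : IsUnit (1 + X).det) : cayley (cayley X) = X := by
  have hinv : (1 + cayley X)⁻¹ = (2 : ℝ)⁻¹ • (1 + X) := by
    refine inv_eq_right_inv ?_
    rw [cayley, add_sub_cancel, smul_mul_smul_comm, nonsing_inv_mul _ h]
    norm_num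
  rw [cayley, hinv, smul_inv_smul₀ two_ne_zero, add_sub_cancel_left]

theorem transpose_cayley_eq_neg (h : IsUnit (1 + a).det) (ha : aᵀ * a = 1) :
    (cayley a)ᵀ = -cayley a := by
  have hinv : (1 + aᵀ)⁻¹ = 1 - (1 + a)⁻¹ := by
    have haT : 1 + aᵀ = aᵀ * (1 + a) := by rw [Matrix.mul_add, ha, Matrix.mul_one, add_comm]
    rw [haT, Matrix.mul_inv_rev, inv_eq_right_inv ha, eq_sub_iff_add_eq]
    nth_rw 2 [← Matrix.mul_one (1 + a)⁻¹]
    rw [← Matrix.mul_add, add_comm a, nonsing_inv_mul _ h]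
  rw [cayley, transpose_sub, transpose_smul, transpose_nonsing_inv, transpose_add, transpose_one,
    hinv, smul_sub, two_smul]
  abel

theorem frobenius_norm_cayley_sub_le (hX : Xᵀ = -X) (hY : Yᵀ = -Y) :
    ‖cayley X - cayley Y‖ ≤ 2 * ‖X - Y‖ := by
  have h : cayley X - cayley Y = (2 : ℝ) • ((1 + X)⁻¹ * ((Y - X) * (1 + Y)⁻¹)) := by
    have hsub : Y - X = (1 + Y) - (1 + X) := by abel
    rw [hsub, Matrix.sub_mul, mul_nonsing_inv _ (isUnit_det_one_add_of_transpose_eq_neg hY),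
      Matrix.mul_sub, Matrix.mul_one,
      nonsing_inv_mul_cancel_left _ _ (isUnit_det_one_add_of_transpose_eq_neg hX), cayley, cayley,
      smul_sub]
    abel
  rw [h, norm_smul, Real.norm_ofNat, norm_sub_rev X]
  gcongr
  exact (frobenius_norm_one_add_inv_mul_le hX _).trans (frobenius_norm_mul_one_add_inv_le hY _)

theorem isUnit_det_one_add_of_frobenius_norm_lt (ha : ‖1 - a‖ < 2) : IsUnit (1 + a).det := by
  have hsmall : ‖(2 : ℝ)⁻¹ • (1 - a)‖ < 1 := by
    rw [norm_smul, norm_inv, Real.norm_ofNat]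
    linarith
  have h : 1 + a = (2 : ℝ) • (1 - (2 : ℝ)⁻¹ • (1 - a)) := by
    rw [smul_sub, smul_inv_smul₀ two_ne_zero, two_smul]
    abel
  rw [h, ← isUnit_iff_isUnit_det]
  exact (isUnit_one_sub_of_norm_lt_one hsmall).smul (Units.mk0 (2 : ℝ) two_ne_zero)

theorem frobenius_norm_cayley_le (ha : ‖1 - a‖ < 2) :
    ‖cayley a‖ ≤ ‖1 - a‖ / (2 - ‖1 - a‖) := by
  have h : (2 : ℝ) • cayley a = (1 - a) + (1 - a) * cayley a := by
    nth_rw 1 [← one_add_mul_cayley (isUnit_det_one_add_of_frobenius_norm_lt ha)]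
    rw [← Matrix.add_mul, two_smul, add_add_sub_cancel, Matrix.add_mul, Matrix.one_mul]
  have hle : 2 * ‖cayley a‖ ≤ ‖1 - a‖ + ‖1 - a‖ * ‖cayley a‖ :=
    calc 2 * ‖cayley a‖ = ‖(1 - a) + (1 - a) * cayley a‖ := by
          rw [← h, norm_smul, Real.norm_ofNat]
      _ ≤ ‖1 - a‖ + ‖1 - a‖ * ‖cayley a‖ :=
          (norm_add_le _ _).trans (add_le_add_right (norm_mul_le _ _) _)
  rw [le_div_iff₀ (by linarith)]
  linarith

end Cayley

section CayleyPath

open scoped Matrix.Norms.Frobenius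

variable {n : ℕ} {a b X : Matrix (Fin n) (Fin n) ℝ}

theorem cayley_mem_SO (hX : Xᵀ = -X) : cayley X ∈ SO n := by
  have hu := isUnit_det_one_add_of_transpose_eq_neg hX
  have ht : (1 + X)ᵀ = 1 - X := by rw [transpose_add, transpose_one, hX, sub_eq_add_neg]
  have hdet : (1 - X).det = (1 + X).det := by rw [← ht, det_transpose]
  have hmul := one_add_mul_cayley hu
  have hmulT : (cayley X)ᵀ * (1 - X) = 1 + X := by
    rw [← ht, ← transpose_mul, hmul, ← ht, transpose_transpose]
  refine ⟨?_, hu.mul_left_cancel ?_⟩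
  · rw [← isUnit_iff_isUnit_det] at hu
    have hu' : IsUnit (1 - X) := by rwa [isUnit_iff_isUnit_det, hdet, ← isUnit_iff_isUnit_det]
    refine hu.mul_left_cancel (hu'.mul_right_cancel ?_)
    rw [← Matrix.mul_assoc, hmul, Matrix.mul_assoc, hmulT]
    noncomm_ring
  · rw [← det_mul, hmul, hdet, mul_one]

theorem DSO_one_cayley_le (hX : Xᵀ = -X) : DSO n 1 (cayley X) ≤ ENNReal.ofReal (2 * ‖X‖) := by
  have hskew (t : ℝ) : (t • X)ᵀ = -(t • X) := by rw [transpose_smul, hX, smul_neg]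
  have hlip : LipschitzWith (2 * ‖X‖₊) fun t : ℝ => cayley (t • X) := by
    refine LipschitzWith.of_dist_le_mul fun s t => ?_
    rw [dist_eq_norm]
    refine (frobenius_norm_cayley_sub_le (hskew s) (hskew t)).trans_eq ?_
    rw [← sub_smul, norm_smul, Real.dist_eq, Real.norm_eq_abs]
    push_cast
    ring
  have h := intrinsicDistE_le_of_lipschitzWith hlip fun t _ => cayley_mem_SO (hskew t)
  rw [zero_smul, one_smul, cayley_zero] at h
  refine (DSO_eq_intrinsicDistE.trans_le h).trans_eq ?_
  rw [ENNReal.ofReal_mul zero_le_two, ofReal_norm]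
  simp [enorm]

theorem DSO_one_le_of_frobenius_norm_lt (ha : a ∈ SO n) (ha2 : ‖1 - a‖ < 2) :
    DSO n 1 a ≤ ENNReal.ofReal (2 * (‖1 - a‖ / (2 - ‖1 - a‖))) := by
  have hunit := isUnit_det_one_add_of_frobenius_norm_lt ha2
  have h := DSO_one_cayley_le (transpose_cayley_eq_neg hunit (transpose_mul_self_of_mem_SO ha))
  rw [cayley_cayley hunit] at h
  refine h.trans (ENNReal.ofReal_le_ofReal ?_)
  gcongr
  exact frobenius_norm_cayley_le ha2

theorem DSO_le_of_frobenius_norm_sub_le (ha : a ∈ SO n) (hb : b ∈ SO n) {δ : ℝ} (hδ : δ ≤ 1)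
    (hab : ‖a - b‖ ≤ δ) : DSO n a b ≤ ENNReal.ofReal ((1 + δ) * ‖a - b‖) := by
  have hnorm : ‖1 - b * aᵀ‖ = ‖a - b‖ := by
    rw [← ha.1, ← Matrix.sub_mul, frobenius_norm_mul_of_mem_SO_right (transpose_mem_SO ha)]
  have hright : DSO n a b ≤ DSO n 1 (b * aᵀ) := by
    simpa [Matrix.mul_assoc, transpose_mul_self_of_mem_SO ha] using
      DSO_mul_right_le (a := 1) (b := b * aᵀ) ha
  refine (hright.trans (DSO_one_le_of_frobenius_norm_lt (mul_mem_SO hb (transpose_mem_SO ha))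
    (by linarith))).trans (ENNReal.ofReal_le_ofReal ?_)
  have h0 := norm_nonneg (a - b)
  rw [hnorm, ← mul_div_assoc, div_le_iff₀ (by linarith)]
  nlinarith [mul_nonneg h0 (mul_nonneg (h0.trans hab) (sub_nonneg.2 hδ)),
    mul_nonneg h0 (sub_nonneg.2 hab), mul_nonneg (mul_nonneg h0 (h0.trans hab)) (sub_nonneg.2 hab)]

end CayleyPath

/-! ### Plane rotations -/

section Rotation

variable {n : ℕ} {i j : Fin n}

theorem kacRot_eq_one_add (hij : i ≠ j) (θ : ℝ) :
    kacRot i j θ = 1 + (Real.cos θ - 1) • (single i i (1 : ℝ) + single j j 1) +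
      Real.sin θ • (single j i (1 : ℝ) - single i j 1) := by
  ext k l
  simp only [kacRot, Matrix.of_apply, Matrix.add_apply, Matrix.sub_apply, Matrix.smul_apply,
    Matrix.single_apply, Matrix.one_apply, smul_eq_mul]
  by_cases h1 : k = i <;> by_cases h2 : l = i <;> by_cases h3 : k = j <;> by_cases h4 : l = j <;>
    simp_all [eq_comm]

theorem kacRot_zero (hij : i ≠ j) : kacRot i j 0 = 1 := by
  simp [kacRot_eq_one_add hij]

theorem kacRot_mul_kacRot (hij : i ≠ j) (θ φ : ℝ) :
    kacRot i j θ * kacRot i j φ = kacRot i j (θ + φ) := by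
  -- `J` is a complex structure on the plane with orthogonal projection `P`.
  set P : Matrix (Fin n) (Fin n) ℝ := single i i (1 : ℝ) + single j j 1 with hP
  set J : Matrix (Fin n) (Fin n) ℝ := single j i (1 : ℝ) - single i j 1 with hJ
  have hPP : P * P = P := by
    simp [hP, Matrix.add_mul, Matrix.mul_add, hij, hij.symm]
  have hPJ : P * J = J := by
    simp [hP, hJ, Matrix.add_mul, Matrix.mul_sub, hij, hij.symm]
  have hJP : J * P = J := by
    simp [hP, hJ, Matrix.sub_mul, Matrix.mul_add, hij, hij.symm, ← sub_eq_add_neg]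
  have hJJ : J * J = -P := by
    simp [hP, hJ, Matrix.sub_mul, Matrix.mul_sub, hij, hij.symm, -neg_add_rev, neg_add']
  rw [kacRot_eq_one_add hij, kacRot_eq_one_add hij, kacRot_eq_one_add hij, ← hP, ← hJ]
  simp only [Matrix.add_mul, Matrix.mul_add, Matrix.smul_mul, Matrix.mul_smul, hPP, hPJ, hJP, hJJ,
    Matrix.one_mul, Matrix.mul_one, Real.cos_add, Real.sin_add]
  module

theorem transpose_kacRot (hij : i ≠ j) (θ : ℝ) : (kacRot i j θ)ᵀ = kacRot i j (-θ) := by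
  rw [kacRot_eq_one_add hij, kacRot_eq_one_add hij]
  simp only [transpose_add, transpose_smul, transpose_sub, transpose_one, transpose_single,
    Real.cos_neg, Real.sin_neg]
  module

theorem kacRot_mem_SO (hij : i ≠ j) (θ : ℝ) : kacRot i j θ ∈ SO n := by
  have horth : kacRot i j θ * (kacRot i j θ)ᵀ = 1 := by
    rw [transpose_kacRot hij, kacRot_mul_kacRot hij, add_neg_cancel, kacRot_zero hij]
  have hdet_sq : (kacRot i j θ).det * (kacRot i j θ).det = 1 := by
    simpa using congrArg det horth
  have hdet_nonneg : 0 ≤ (kacRot i j θ).det := by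
    rw [← add_halves θ, ← kacRot_mul_kacRot hij, det_mul]
    exact mul_self_nonneg _
  exact ⟨horth, by nlinarith⟩

theorem kacRot_add_two_pi (i j : Fin n) (θ : ℝ) :
    kacRot i j (θ + 2 * Real.pi) = kacRot i j θ := by
  simp only [kacRot, Real.cos_add_two_pi, Real.sin_add_two_pi]

theorem continuous_kacRot (i j : Fin n) : Continuous (kacRot i j) := by
  refine continuous_pi fun k => continuous_pi fun l => ?_
  simp only [kacRot, Matrix.of_apply]
  split_ifs <;> fun_prop

theorem trace_kacRot_mul (hij : i ≠ j) (θ : ℝ) (b : Matrix (Fin n) (Fin n) ℝ) :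
    (kacRot i j θ * b).trace =
      b.trace + (Real.cos θ - 1) * (b i i + b j j) + Real.sin θ * (b i j - b j i) := by
  simp only [kacRot_eq_one_add hij, Matrix.add_mul, Matrix.sub_mul, Matrix.smul_mul, trace_add,
    trace_sub, trace_smul, trace_single_mul, one_mul, smul_eq_mul]

theorem exists_kacRot_eq {a : Matrix (Fin 2) (Fin 2) ℝ} (ha : a ∈ SO 2) :
    ∃ θ : ℝ, kacRot 0 1 θ = a := by
  rw [← coe_specialOrthogonalGroup_eq_SO, SetLike.mem_coe,
    mem_specialOrthogonalGroup_fin_two_iff] at ha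
  obtain ⟨h11, h01, hsq⟩ := ha
  let z : ℂ := ⟨a 0 0, a 1 0⟩
  have hz : ‖z‖ = 1 := by
    rw [Complex.norm_eq_sqrt_sq_add_sq, Real.sqrt_eq_one, ← hsq, h01, neg_sq]
  have hcos : Real.cos z.arg = a 0 0 := by simpa [hz] using Complex.norm_mul_cos_arg z
  have hsin : Real.sin z.arg = a 1 0 := by simpa [hz] using Complex.norm_mul_sin_arg z
  refine ⟨z.arg, ?_⟩
  ext k l
  fin_cases k <;> fin_cases l <;> simp [kacRot, hcos, hsin, h11, h01]

end Rotation

/-! ### The optimal rotation in a plane -/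

section OptimalRotation

open scoped Matrix.Norms.Frobenius

variable {n : ℕ} {i j : Fin n} {b x y : Matrix (Fin n) (Fin n) ℝ}

theorem exists_mul_cos_add_mul_sin_eq_sqrt (p q : ℝ) :
    ∃ φ : ℝ, p * Real.cos φ + q * Real.sin φ = √(p ^ 2 + q ^ 2) := by
  let z : ℂ := ⟨p, q⟩
  have hcos : ‖z‖ * Real.cos z.arg = p := Complex.norm_mul_cos_arg z
  have hsin : ‖z‖ * Real.sin z.arg = q := Complex.norm_mul_sin_arg z
  refine ⟨z.arg, ?_⟩
  have hnorm : ‖z‖ = √(p ^ 2 + q ^ 2) := Complex.norm_eq_sqrt_sq_add_sq z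
  rw [← hnorm]
  nth_rw 1 [← hcos, ← hsin]
  linear_combination ‖z‖ * Real.cos_sq_add_sin_sq z.arg

theorem frobenius_norm_one_sub_sq (hb : b ∈ SO n) : ‖1 - b‖ ^ 2 = 2 * n - 2 * b.trace := by
  have h : (1 - b)ᵀ * (1 - b) = 1 - b - bᵀ + bᵀ * b := by
    rw [transpose_sub, transpose_one]
    noncomm_ring
  rw [frobenius_norm_sq_eq_trace, h, transpose_mul_self_of_mem_SO hb, trace_add, trace_sub,
    trace_sub, trace_transpose, trace_one, Fintype.card_fin]
  ring

theorem sq_add_sq_le_one_of_mem_SO (hb : b ∈ SO n) (hij : i ≠ j) (k : Fin n) :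
    b k i ^ 2 + b k j ^ 2 ≤ 1 := by
  have hrow : ∑ l, b k l ^ 2 = 1 := by
    simpa [Matrix.mul_apply, pow_two] using congrFun (congrFun hb.1 k) k
  rw [← hrow, ← Finset.sum_pair (f := fun l => b k l ^ 2) hij]
  exact Finset.sum_le_univ_sum_of_nonneg fun _ => sq_nonneg _

theorem exists_frobenius_norm_one_sub_kacRot_mul_sq_le (hij : i ≠ j) (hb : b ∈ SO n) :
    ∃ φ : ℝ, ‖1 - kacRot i j φ * b‖ ^ 2 ≤ ‖1 - b‖ ^ 2 - (b i j - b j i) ^ 2 / 2 := by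
  obtain ⟨φ, hφ⟩ := exists_mul_cos_add_mul_sin_eq_sqrt (b i i + b j j) (b i j - b j i)
  refine ⟨φ, ?_⟩
  rw [frobenius_norm_one_sub_sq (mul_mem_SO (kacRot_mem_SO hij φ) hb),
    frobenius_norm_one_sub_sq hb, trace_kacRot_mul hij]
  -- The trace increases by `s - p`, where `(s - p) * (s + p) = q ^ 2` and `p ≤ s ≤ 2`.
  set p := b i i + b j j
  set q := b i j - b j i
  set s := √(p ^ 2 + q ^ 2)
  have hs_sq : s ^ 2 = p ^ 2 + q ^ 2 := Real.sq_sqrt (by positivity)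
  have hps : p ≤ s := Real.le_sqrt_of_sq_le (le_add_of_nonneg_right (sq_nonneg q))
  have hs_two : s ≤ 2 := by
    refine Real.sqrt_le_iff.2 ⟨zero_le_two, ?_⟩
    have hrow_i := sq_add_sq_le_one_of_mem_SO hb hij i
    have hrow_j := sq_add_sq_le_one_of_mem_SO hb hij j
    nlinarith [sq_nonneg (b i i - b j j), sq_nonneg (b i j + b j i)]
  nlinarith [mul_nonneg (sub_nonneg.2 hps) (by linarith : 0 ≤ 4 - (s + p))]

theorem exists_frobenius_norm_sub_kacRot_mul_sq_le (hij : i ≠ j) (hx : x ∈ SO n) (hy : y ∈ SO n) :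
    ∃ φ : ℝ, ‖x - kacRot i j φ * y‖ ^ 2 ≤
      ‖x - y‖ ^ 2 - ((y * xᵀ) i j - (y * xᵀ) j i) ^ 2 / 2 := by
  have hnorm (z : Matrix (Fin n) (Fin n) ℝ) : ‖x - z‖ = ‖1 - z * xᵀ‖ := by
    rw [← frobenius_norm_mul_of_mem_SO_right (transpose_mem_SO hx) (x - z), Matrix.sub_mul, hx.1]
  simpa only [hnorm, Matrix.mul_assoc] using
    exists_frobenius_norm_one_sub_kacRot_mul_sq_le hij (mul_mem_SO hy (transpose_mem_SO hx))

theorem ne_of_mem_pairs {p : Fin n × Fin n} (hp : p ∈ pairs n) : p.1 ≠ p.2 :=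
  (Finset.mem_filter.1 hp).2.ne

theorem card_pairs (n : ℕ) : (pairs n).card = n.choose 2 := by
  rw [pairs, Finset.card_filter, Fintype.sum_prod_type_right, Nat.choose_two_right,
    ← Finset.sum_range_id, ← Fin.sum_univ_eq_sum_range (fun i => i)]
  refine Finset.sum_congr rfl fun j _ => ?_
  rw [← Finset.card_filter, Finset.filter_gt_eq_Iio, Fin.card_Iio]

theorem sum_pairs_add_sum_pairs {M : Type*} [AddCommMonoid M] (f : Fin n → Fin n → M)
    (hsymm : ∀ i j, f i j = f j i) (hdiag : ∀ i, f i i = 0) :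
    ∑ p ∈ pairs n, f p.1 p.2 + ∑ p ∈ pairs n, f p.1 p.2 = ∑ i, ∑ j, f i j := by
  rw [pairs, Finset.sum_filter, Fintype.sum_prod_type]
  nth_rw 2 [Finset.sum_comm]
  simp only [← Finset.sum_add_distrib]
  refine Finset.sum_congr rfl fun i _ => Finset.sum_congr rfl fun j _ => ?_
  rcases lt_trichotomy i j with h | rfl | h
  · simp [h, h.not_gt]
  · simp [hdiag]
  · simp [h, h.not_gt, hsymm j i]

theorem two_mul_sum_pairs_sub_sq (b : Matrix (Fin n) (Fin n) ℝ) :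
    2 * ∑ p ∈ pairs n, (b p.1 p.2 - b p.2 p.1) ^ 2 = ‖b - bᵀ‖ ^ 2 := by
  rw [two_mul, sum_pairs_add_sum_pairs (fun i j => (b i j - b j i) ^ 2)
    (fun i j => by ring) (fun i => by ring), frobenius_norm_def, ← Real.sqrt_eq_rpow,
    Real.sq_sqrt (by positivity)]
  simp

theorem two_mul_frobenius_norm_sub_sq_le (hb : b ∈ SO n) :
    2 * ‖1 - b‖ - ‖1 - b‖ ^ 2 ≤ ‖b - bᵀ‖ := by
  have hmul : b * (b - bᵀ) = (1 - b) * (1 - b) - (2 : ℝ) • (1 - b) := by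
    rw [Matrix.mul_sub, hb.1, two_smul]
    noncomm_ring
  calc 2 * ‖1 - b‖ - ‖1 - b‖ ^ 2
      ≤ ‖(2 : ℝ) • (1 - b)‖ - ‖(1 - b) * (1 - b)‖ := by
        rw [norm_smul, Real.norm_ofNat, sq]
        exact sub_le_sub_left (norm_mul_le _ _) _
    _ ≤ ‖(2 : ℝ) • (1 - b) - (1 - b) * (1 - b)‖ := norm_sub_norm_le _ _
    _ = ‖b - bᵀ‖ := by rw [norm_sub_rev, ← hmul, frobenius_norm_mul_of_mem_SO_left hb]

theorem sum_pairs_frobenius_norm_sq_sub_le (hx : x ∈ SO n) (hy : y ∈ SO n) (hxy : ‖x - y‖ ≤ 2) :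
    ∑ p ∈ pairs n, (‖x - y‖ ^ 2 - ((y * xᵀ) p.1 p.2 - (y * xᵀ) p.2 p.1) ^ 2 / 2) ≤
      (n.choose 2 - (1 - ‖x - y‖ / 2) ^ 2) * ‖x - y‖ ^ 2 := by
  have hb := mul_mem_SO hy (transpose_mem_SO hx)
  set b := y * xᵀ
  have hnorm : ‖1 - b‖ = ‖x - y‖ := by
    rw [← hx.1, ← Matrix.sub_mul, frobenius_norm_mul_of_mem_SO_right (transpose_mem_SO hx)]
  have hanti : (2 * ‖x - y‖ - ‖x - y‖ ^ 2) ^ 2 ≤ ‖b - bᵀ‖ ^ 2 := by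
    rw [← hnorm] at hxy ⊢
    refine pow_le_pow_left₀ ?_ (two_mul_frobenius_norm_sub_sq_le hb) 2
    nlinarith [norm_nonneg (1 - b)]
  have hsum := two_mul_sum_pairs_sub_sq b
  rw [Finset.sum_sub_distrib, ← Finset.sum_div, Finset.sum_const, card_pairs, nsmul_eq_mul]
  linarith

end OptimalRotation

/-! ### Distances between orbits of plane rotations -/

section OrbitDistance

open scoped Matrix.Norms.Frobenius

variable {n : ℕ} {i j : Fin n} {x y : Matrix (Fin n) (Fin n) ℝ} {δ : ℝ}

/-- The distance between the orbits of `x` and `y` under the rotations of the `(i, j)`-plane. It is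
the cost of one step of two Kac walks, at `x` and `y`, which use this plane and whose angles differ
by an optimal shift. -/
def planeDist (i j : Fin n) (x y : Matrix (Fin n) (Fin n) ℝ) : ℝ≥0∞ :=
  ⨅ θ : ℝ, DSO n x (kacRot i j θ * y)

/-- The `ℓ²` combination of the orbit distances `planeDist` over all coordinate planes. -/
def kacDist (n : ℕ) (x y : Matrix (Fin n) (Fin n) ℝ) : ℝ≥0∞ :=
  (∑ p ∈ pairs n, planeDist p.1 p.2 x y ^ (2 : ℝ)) ^ (1 / 2 : ℝ)

theorem planeDist_triangle (hij : i ≠ j) (x y z : Matrix (Fin n) (Fin n) ℝ) :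
    planeDist i j x z ≤ planeDist i j x y + planeDist i j y z := by
  simp only [planeDist, ENNReal.iInf_add, ENNReal.add_iInf]
  refine le_iInf fun θ => le_iInf fun φ => iInf_le_of_le (φ + θ) ?_
  calc DSO n x (kacRot i j (φ + θ) * z)
      ≤ DSO n x (kacRot i j φ * y) +
          DSO n (kacRot i j φ * y) (kacRot i j φ * (kacRot i j θ * z)) := by
        rw [← kacRot_mul_kacRot hij, Matrix.mul_assoc]
        exact DSO_triangle
    _ ≤ DSO n x (kacRot i j φ * y) + DSO n y (kacRot i j θ * z) := by
        gcongr
        exact DSO_mul_left_le (kacRot_mem_SO hij φ)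

theorem kacDist_triangle (x y z : Matrix (Fin n) (Fin n) ℝ) :
    kacDist n x z ≤ kacDist n x y + kacDist n y z := by
  refine le_trans ?_ (ENNReal.Lp_add_le (pairs n) _ _ one_le_two)
  unfold kacDist
  gcongr with p hp
  exact planeDist_triangle (ne_of_mem_pairs hp) x y z

theorem planeDist_rpow_two_le (hij : i ≠ j) (hx : x ∈ SO n) (hy : y ∈ SO n) (hδ : δ ≤ 1)
    (hxy : ‖x - y‖ ≤ δ) :
    planeDist i j x y ^ (2 : ℝ) ≤ ENNReal.ofReal
      ((1 + δ) ^ 2 * (‖x - y‖ ^ 2 - ((y * xᵀ) i j - (y * xᵀ) j i) ^ 2 / 2)) := by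
  obtain ⟨φ, hφ⟩ := exists_frobenius_norm_sub_kacRot_mul_sq_le hij hx hy
  have hδ0 : 0 ≤ δ := (norm_nonneg _).trans hxy
  have hrot : ‖x - kacRot i j φ * y‖ ≤ ‖x - y‖ :=
    (sq_le_sq₀ (norm_nonneg _) (norm_nonneg _)).1 (hφ.trans (sub_le_self _ (by positivity)))
  calc planeDist i j x y ^ (2 : ℝ)
      ≤ ENNReal.ofReal ((1 + δ) * ‖x - kacRot i j φ * y‖) ^ (2 : ℝ) := by
        gcongr
        exact (iInf_le _ φ).trans (DSO_le_of_frobenius_norm_sub_le hx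
          (mul_mem_SO (kacRot_mem_SO hij φ) hy) hδ (hrot.trans hxy))
    _ = ENNReal.ofReal ((1 + δ) ^ 2 * ‖x - kacRot i j φ * y‖ ^ 2) := by
        rw [ENNReal.rpow_two, ← ENNReal.ofReal_pow (by positivity), mul_pow]
    _ ≤ _ := by gcongr

theorem kacDist_le_mul_edist (hx : x ∈ SO n) (hy : y ∈ SO n) (hδ : δ ≤ 1) (hxy : ‖x - y‖ ≤ δ) :
    kacDist n x y ≤
      ENNReal.ofReal ((1 + δ) * √(n.choose 2 - (1 - δ / 2) ^ 2)) * edist x y := by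
  have hδ0 : 0 ≤ δ := (norm_nonneg _).trans hxy
  have hgain_nonneg : ∀ p ∈ pairs n,
      0 ≤ ‖x - y‖ ^ 2 - ((y * xᵀ) p.1 p.2 - (y * xᵀ) p.2 p.1) ^ 2 / 2 := fun p hp =>
    have ⟨_, hφ⟩ := exists_frobenius_norm_sub_kacRot_mul_sq_le (ne_of_mem_pairs hp) hx hy
    (sq_nonneg _).trans hφ
  rw [kacDist, one_div, ENNReal.rpow_inv_le_iff two_pos]
  calc ∑ p ∈ pairs n, planeDist p.1 p.2 x y ^ (2 : ℝ)
      ≤ ∑ p ∈ pairs n, ENNReal.ofReal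
          ((1 + δ) ^ 2 * (‖x - y‖ ^ 2 - ((y * xᵀ) p.1 p.2 - (y * xᵀ) p.2 p.1) ^ 2 / 2)) :=
        Finset.sum_le_sum fun p hp => planeDist_rpow_two_le (ne_of_mem_pairs hp) hx hy hδ hxy
    _ ≤ ENNReal.ofReal ((1 + δ) ^ 2 * ((n.choose 2 - (1 - ‖x - y‖ / 2) ^ 2) * ‖x - y‖ ^ 2)) := by
        rw [← ENNReal.ofReal_sum_of_nonneg fun p hp =>
          mul_nonneg (sq_nonneg _) (hgain_nonneg p hp), ← Finset.mul_sum]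
        gcongr
        exact sum_pairs_frobenius_norm_sq_sub_le hx hy (by linarith)
    _ ≤ ENNReal.ofReal (((1 + δ) * √(n.choose 2 - (1 - δ / 2) ^ 2) * ‖x - y‖) ^ 2) := by
        rw [mul_pow, mul_pow, Real.sq_sqrt', mul_assoc]
        gcongr
        refine le_max_of_le_left ?_
        gcongr
        linarith
    _ = _ := by
        rw [edist_dist, dist_eq_norm, ← ENNReal.ofReal_mul (by positivity), ENNReal.rpow_two,
          ENNReal.ofReal_pow (by positivity)]

theorem kacDist_le_ofReal_mul_DSO (hn : 2 ≤ n) (hδ0 : 0 < δ) (hδ : δ ≤ 1)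
    (x y : Matrix (Fin n) (Fin n) ℝ) :
    kacDist n x y ≤ ENNReal.ofReal ((1 + δ) * √(n.choose 2 - (1 - δ / 2) ^ 2)) * DSO n x y := by
  have hN : (1 : ℝ) ≤ n.choose 2 := by exact_mod_cast Nat.choose_pos hn
  have hC : 0 < (1 + δ) * √(n.choose 2 - (1 - δ / 2) ^ 2) :=
    mul_pos (by linarith) (Real.sqrt_pos.2 (by nlinarith))
  rw [DSO_eq_intrinsicDistE]
  refine le_mul_intrinsicDistE_of_locally_le (ENNReal.ofReal_pos.2 hC).ne' ENNReal.ofReal_ne_top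
    (fun a _ b _ c _ => kacDist_triangle a b c) fun a _ => ?_
  refine ⟨SO n ∩ Metric.ball a (δ / 2),
    inter_mem_nhdsWithin _ (Metric.ball_mem_nhds a (half_pos hδ0)), ?_⟩
  rintro b ⟨hb, hab⟩ c ⟨hc, hac⟩
  refine kacDist_le_mul_edist hb hc hδ ?_
  rw [← dist_eq_norm]
  calc dist b c ≤ dist b a + dist c a := dist_triangle_right b c a
    _ ≤ δ / 2 + δ / 2 := add_le_add (Metric.mem_ball.1 hab).le (Metric.mem_ball.1 hac).le
    _ = δ := add_halves δ

theorem kacDist_two_eq_zero {x y : Matrix (Fin 2) (Fin 2) ℝ} (hx : x ∈ SO 2) (hy : y ∈ SO 2) :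
    kacDist 2 x y = 0 := by
  obtain ⟨θ, hθ⟩ := exists_kacRot_eq (mul_mem_SO hx (transpose_mem_SO hy))
  have horbit : kacRot 0 1 θ * y = x := by
    rw [hθ, Matrix.mul_assoc, transpose_mul_self_of_mem_SO hy, Matrix.mul_one]
  have hdist : planeDist 0 1 x y = 0 :=
    le_zero_iff.1 ((iInf_le _ θ).trans_eq (by rw [horbit, DSO_self hx]))
  have hpairs : pairs 2 = {(0, 1)} := by decide
  simp [kacDist, hpairs, hdist]

theorem kacDist_le_sqrt_mul_DSO (hn : 2 ≤ n) (hx : x ∈ SO n) (hy : y ∈ SO n) :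
    kacDist n x y ≤ ENNReal.ofReal √(n.choose 2 - 1) * DSO n x y := by
  -- For `n = 2` the constant vanishes, and the limit `δ → 0` says nothing if `DSO n x y = ⊤`.
  obtain rfl | hn := hn.eq_or_lt
  · exact (kacDist_two_eq_zero hx hy).trans_le zero_le
  have hN : 1 < n.choose 2 := calc
    1 < Nat.choose 3 2 := by decide
    _ ≤ n.choose 2 := Nat.choose_le_choose 2 hn
  have hpos : 0 < √((n.choose 2 : ℝ) - 1) := Real.sqrt_pos.2 (sub_pos.2 (by exact_mod_cast hN))
  have hlim : Tendsto (fun δ : ℝ => ENNReal.ofReal ((1 + δ) * √(n.choose 2 - (1 - δ / 2) ^ 2)))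
      (𝓝[>] 0) (𝓝 (ENNReal.ofReal √(n.choose 2 - 1))) := by
    refine tendsto_nhdsWithin_of_tendsto_nhds (Continuous.tendsto' ?_ _ _ (by simp))
    exact ENNReal.continuous_ofReal.comp (by fun_prop)
  refine ge_of_tendsto (ENNReal.Tendsto.mul_const hlim (.inl (ENNReal.ofReal_pos.2 hpos).ne')) ?_
  filter_upwards [Ioc_mem_nhdsGT zero_lt_one] with δ hδ
  exact kacDist_le_ofReal_mul_DSO (by omega) hδ.1 hδ.2 x y

end OrbitDistance

/-! ### Measurable near-minimizers -/

section MeasurableSelection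

theorem iInf_denseSeq {β : Type*} [TopologicalSpace β] [TopologicalSpace.SeparableSpace β]
    [Nonempty β] {f : β → ℝ≥0∞} (hf : Continuous f) :
    ⨅ k, f (TopologicalSpace.denseSeq β k) = ⨅ b, f b := by
  rw [← (TopologicalSpace.denseRange_denseSeq β).ciInf' hf, iInf_range']

theorem exists_measurable_le_iInf_add {α β : Type*} [MeasurableSpace α] [TopologicalSpace β]
    [TopologicalSpace.SeparableSpace β] [MeasurableSpace β] [Nonempty β] {f : α → β → ℝ≥0∞}
    (hf : ∀ b, Measurable fun a => f a b) (hcont : ∀ a, Continuous (f a)) {ε : ℝ≥0∞}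
    (hε : ε ≠ 0) : ∃ φ : α → β, Measurable φ ∧ ∀ a, f a (φ a) ≤ (⨅ b, f a b) + ε := by
  classical
  let u := TopologicalSpace.denseSeq β
  have hexists (a : α) : ∃ k, f a (u k) ≤ (⨅ k, f a (u k)) + ε := by
    rcases eq_or_ne (⨅ k, f a (u k)) ⊤ with htop | htop
    · exact ⟨0, by rw [htop, top_add]; exact le_top⟩
    · obtain ⟨k, hk⟩ := iInf_lt_iff.1 (ENNReal.lt_add_right htop hε)
      exact ⟨k, hk.le⟩
  have hmeas (k : ℕ) : MeasurableSet {a | f a (u k) ≤ (⨅ k, f a (u k)) + ε} :=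
    measurableSet_le (hf _) ((Measurable.iInf fun k => hf (u k)).add_const ε)
  refine ⟨fun a => u (Nat.find (hexists a)),
    measurable_from_nat.comp (measurable_find hexists hmeas), fun a => ?_⟩
  exact (Nat.find_spec (hexists a)).trans_eq (by rw [iInf_denseSeq (hcont a)])

end MeasurableSelection

/-! ### Measurability of the intrinsic metric -/

instance borelSpace_matrix {m n R : Type*} [Countable m] [Countable n] [TopologicalSpace R]
    [SecondCountableTopology R] [MeasurableSpace R] [BorelSpace R] : BorelSpace (Matrix m n R) :=
  inferInstanceAs (BorelSpace (m → n → R))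

instance secondCountableTopology_matrix {m n R : Type*} [Countable m] [Countable n]
    [TopologicalSpace R] [SecondCountableTopology R] : SecondCountableTopology (Matrix m n R) :=
  inferInstanceAs (SecondCountableTopology (m → n → R))

section Measurability

open scoped Matrix.Norms.Frobenius

variable {n : ℕ} {i j : Fin n}

theorem continuousOn_DSO :
    ContinuousOn (fun z : Matrix (Fin n) (Fin n) ℝ × Matrix (Fin n) (Fin n) ℝ => DSO n z.1 z.2)
      (SO n ×ˢ SO n) := by
  simp only [DSO_eq_intrinsicDistE]
  refine continuousOn_intrinsicDistE fun a ha => ?_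
  have hlim : Tendsto (fun b => ENNReal.ofReal ((1 + 1) * ‖b - a‖)) (𝓝[SO n] a) (𝓝 0) :=
    tendsto_nhdsWithin_of_tendsto_nhds
      (Continuous.tendsto' (ENNReal.continuous_ofReal.comp (by fun_prop)) _ _ (by simp))
  refine tendsto_of_tendsto_of_tendsto_of_le_of_le' tendsto_const_nhds hlim
    (Eventually.of_forall fun _ => zero_le) ?_
  filter_upwards [self_mem_nhdsWithin, mem_nhdsWithin_of_mem_nhds (Metric.closedBall_mem_nhds a
    one_pos)] with b hb hba
  exact DSO_eq_intrinsicDistE.symm.trans_le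
    (DSO_le_of_frobenius_norm_sub_le hb ha le_rfl (by rwa [← dist_eq_norm]))

theorem measurable_DSO :
    Measurable fun z : Matrix (Fin n) (Fin n) ℝ × Matrix (Fin n) (Fin n) ℝ => DSO n z.1 z.2 := by
  have hS : MeasurableSet (SO n ×ˢ SO n) := isClosed_SO.measurableSet.prod isClosed_SO.measurableSet
  refine measurable_of_restrict_of_restrict_compl hS continuousOn_DSO.domRestrict.measurable ?_
  have htop : (SO n ×ˢ SO n)ᶜ.domRestrict
      (fun z : Matrix (Fin n) (Fin n) ℝ × Matrix (Fin n) (Fin n) ℝ => DSO n z.1 z.2) = fun _ => ⊤ :=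
    funext fun z => DSO_eq_top z.2
  exact htop ▸ measurable_const

theorem continuous_DSO_kacRot_mul (hij : i ≠ j) (x y : Matrix (Fin n) (Fin n) ℝ) :
    Continuous fun θ => DSO n x (kacRot i j θ * y) := by
  by_cases h : x ∈ SO n ∧ y ∈ SO n
  · have hrot : Continuous fun θ => (x, kacRot i j θ * y) :=
      continuous_const.prodMk (Continuous.matrix_mul (continuous_kacRot i j) continuous_const)
    have hcomp := continuousOn_DSO.comp_continuous hrot
      fun θ => ⟨h.1, mul_mem_SO (kacRot_mem_SO hij θ) h.2⟩
    exact hcomp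
  · have htop (θ : ℝ) : DSO n x (kacRot i j θ * y) = ⊤ := by
      refine DSO_eq_top fun hθ => h ⟨hθ.1, ?_⟩
      have hmem := mul_mem_SO (kacRot_mem_SO hij (-θ)) hθ.2
      rwa [← Matrix.mul_assoc, kacRot_mul_kacRot hij, neg_add_cancel, kacRot_zero hij,
        Matrix.one_mul] at hmem
    simp only [htop, continuous_const]

end Measurability

/-! ### Couplings -/

section Coupling

variable {X Y Z : Type*} [MeasurableSpace X] [MeasurableSpace Y] [MeasurableSpace Z]

theorem isCoupling_prod (μ ν : Measure X) [IsProbabilityMeasure μ] [IsProbabilityMeasure ν] :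
    IsCoupling (μ.prod ν) μ ν :=
  ⟨by simp, by simp⟩

theorem isCoupling_map_prodMk (ρ : Measure Y) {f g : Y → X} (hf : Measurable f)
    (hg : Measurable g) : IsCoupling (ρ.map fun y => (f y, g y)) (ρ.map f) (ρ.map g) :=
  ⟨Measure.map_map measurable_fst (hf.prodMk hg), Measure.map_map measurable_snd (hf.prodMk hg)⟩

theorem IsCoupling.const_smul {η : Measure (X × X)} {μ ν : Measure X} (h : IsCoupling η μ ν)
    (c : ℝ≥0∞) : IsCoupling (c • η) (c • μ) (c • ν) :=
  ⟨by rw [Measure.map_smul, h.1], by rw [Measure.map_smul, h.2]⟩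

theorem IsCoupling.sum {ι : Type*} {s : Finset ι} {η : ι → Measure (X × X)} {μ ν : ι → Measure X}
    (h : ∀ i ∈ s, IsCoupling (η i) (μ i) (ν i)) :
    IsCoupling (∑ i ∈ s, η i) (∑ i ∈ s, μ i) (∑ i ∈ s, ν i) :=
  ⟨by rw [Measure.map_finset_sum measurable_fst.aemeasurable,
      Finset.sum_congr rfl fun i hi => (h i hi).1],
    by rw [Measure.map_finset_sum measurable_snd.aemeasurable,
      Finset.sum_congr rfl fun i hi => (h i hi).2]⟩

theorem measure_map_bind {μ : Measure X} {κ : X → Measure Y} (hκ : Measurable κ) {f : Y → Z}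
    (hf : Measurable f) : (μ.bind κ).map f = μ.bind fun x => (κ x).map f := by
  have hκf : Measurable fun x => (κ x).map f := (Measure.measurable_map f hf).comp hκ
  ext s hs
  rw [Measure.map_apply hf hs, Measure.bind_apply (hf hs) hκ.aemeasurable,
    Measure.bind_apply hs hκf.aemeasurable]
  simp only [Measure.map_apply hf hs]

theorem measure_bind_map {μ : Measure X} {f : X → Y} (hf : Measurable f) {κ : Y → Measure Z}
    (hκ : Measurable κ) : (μ.map f).bind κ = μ.bind (κ ∘ f) := by
  ext s hs
  rw [Measure.bind_apply hs hκ.aemeasurable, Measure.bind_apply hs (hκ.comp hf).aemeasurable]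
  exact lintegral_map ((Measure.measurable_coe hs).comp hκ) hf

theorem IsCoupling.bind {η : Measure (X × X)} {μ ν : Measure X} (hη : IsCoupling η μ ν)
    {κ : X × X → Measure (Y × Y)} (hκ : Measurable κ) {P : X → Measure Y} (hP : Measurable P)
    (h : ∀ z, IsCoupling (κ z) (P z.1) (P z.2)) : IsCoupling (η.bind κ) (μ.bind P) (ν.bind P) := by
  obtain ⟨rfl, rfl⟩ := hη
  constructor
  · rw [measure_map_bind hκ measurable_fst, measure_bind_map measurable_fst hP]
    exact congrArg η.bind (funext fun z => (h z).1)
  · rw [measure_map_bind hκ measurable_snd, measure_bind_map measurable_snd hP]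
    exact congrArg η.bind (funext fun z => (h z).2)

theorem measurable_map_uncurry {F : X × Y → Z} (hF : Measurable F) (ρ : Measure Y) [SFinite ρ] :
    Measurable fun x => ρ.map fun y => F (x, y) := by
  have hmap (x : X) : ρ.map (fun y => F (x, y)) = (ρ.map (Prod.mk x)).map F :=
    (Measure.map_map hF measurable_prodMk_left).symm
  simp only [hmap]
  exact (Measure.measurable_map F hF).comp Measurable.map_prodMk_left

theorem measurable_const_smul_sum {ι : Type*} (c : ℝ≥0∞) (s : Finset ι) {κ : ι → X → Measure Y}
    (hκ : ∀ i ∈ s, Measurable (κ i)) : Measurable fun x => c • ∑ i ∈ s, κ i x := by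
  refine Measure.measurable_of_measurable_coe _ fun t ht => ?_
  simp only [Measure.smul_apply, Measure.finsetSum_apply, smul_eq_mul]
  exact (Finset.measurable_sum _ fun i hi =>
    (Measure.measurable_coe ht).comp (hκ i hi)).const_mul c

variable {d : X → X → ℝ≥0∞} {p : ℝ} {C : ℝ≥0∞} {S : Set X} {P : X → Measure X}

theorem wassersteinE_rpow_le (hp : 0 < p) {η : Measure (X × X)} {μ ν : Measure X}
    (hη : IsCoupling η μ ν) : wassersteinE d p μ ν ^ p ≤ ∫⁻ z, d z.1 z.2 ^ p ∂η := by
  rw [← ENNReal.le_rpow_inv_iff hp, ← one_div]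
  exact iInf₂_le η hη

theorem wassersteinE_bind_rpow_le (hp : 0 < p) (hP : Measurable P)
    (hd : Measurable fun z : X × X => d z.1 z.2)
    (hcontr : ∀ ε ≠ 0, ∃ κ : X × X → Measure (X × X), Measurable κ ∧
      (∀ z, IsCoupling (κ z) (P z.1) (P z.2)) ∧
      ∀ z ∈ S ×ˢ S, ∫⁻ w, d w.1 w.2 ^ p ∂κ z ≤ C * d z.1 z.2 ^ p + ε)
    {η : Measure (X × X)} [IsProbabilityMeasure η] {μ ν : Measure X} (hη : IsCoupling η μ ν)
    (hμ : μ Sᶜ = 0) (hν : ν Sᶜ = 0) :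
    wassersteinE d p (μ.bind P) (ν.bind P) ^ p ≤ C * ∫⁻ z, d z.1 z.2 ^ p ∂η := by
  refine ENNReal.le_of_forall_pos_le_add fun ε hε _ => ?_
  obtain ⟨κ, hκ, hcoupling, hle⟩ := hcontr ε (ENNReal.coe_pos.2 hε).ne'
  have hfst : ∀ᵐ z ∂η, z.1 ∈ S := ae_of_ae_map measurable_fst.aemeasurable (hη.1 ▸ hμ)
  have hsnd : ∀ᵐ z ∂η, z.2 ∈ S := ae_of_ae_map measurable_snd.aemeasurable (hη.2 ▸ hν)
  calc wassersteinE d p (μ.bind P) (ν.bind P) ^ p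
      ≤ ∫⁻ w, d w.1 w.2 ^ p ∂η.bind κ := wassersteinE_rpow_le hp (hη.bind hκ hP hcoupling)
    _ = ∫⁻ z, ∫⁻ w, d w.1 w.2 ^ p ∂κ z ∂η :=
        Measure.lintegral_bind hκ.aemeasurable (hd.pow_const p).aemeasurable
    _ ≤ ∫⁻ z, (C * d z.1 z.2 ^ p + ε) ∂η := lintegral_mono_ae <| by
        filter_upwards [hfst, hsnd] with z h1 h2 using hle z ⟨h1, h2⟩
    _ = C * ∫⁻ z, d z.1 z.2 ^ p ∂η + ε := by
        rw [lintegral_add_right _ measurable_const, lintegral_const_mul _ (hd.pow_const p),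
          lintegral_const, measure_univ, mul_one]

theorem wassersteinE_bind_le (hp : 0 < p) (hC : C ≠ ⊤) (hP : Measurable P)
    (hd : Measurable fun z : X × X => d z.1 z.2)
    (hcontr : ∀ ε ≠ 0, ∃ κ : X × X → Measure (X × X), Measurable κ ∧
      (∀ z, IsCoupling (κ z) (P z.1) (P z.2)) ∧
      ∀ z ∈ S ×ˢ S, ∫⁻ w, d w.1 w.2 ^ p ∂κ z ≤ C * d z.1 z.2 ^ p + ε)
    {μ ν : Measure X} [IsProbabilityMeasure μ] [IsProbabilityMeasure ν]
    (hμ : μ Sᶜ = 0) (hν : ν Sᶜ = 0) :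
    wassersteinE d p (μ.bind P) (ν.bind P) ≤ C ^ (1 / p) * wassersteinE d p μ ν := by
  rw [wassersteinE.eq_def d p μ ν, iInf_subtype', ENNReal.mul_iInf'
    (fun h => (ENNReal.rpow_ne_top_of_nonneg (by positivity) hC h).elim)
    fun _ => ⟨μ.prod ν, isCoupling_prod μ ν⟩]
  refine le_iInf fun ⟨η, hη⟩ => ?_
  have : IsProbabilityMeasure (η.map Prod.fst) := hη.1 ▸ inferInstance
  have : IsProbabilityMeasure η := Measure.isProbabilityMeasure_of_map Prod.fst
  rw [← ENNReal.mul_rpow_of_nonneg _ _ (by positivity), one_div, ENNReal.le_rpow_inv_iff hp]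
  exact wassersteinE_bind_rpow_le hp hP hd hcontr hη hμ hν

end Coupling

/-! ### The uniform measure on angles -/

section UniformAngle

variable {n : ℕ} {i j : Fin n}

instance isProbabilityMeasure_uniformAngle : IsProbabilityMeasure uniformAngle where
  measure_univ := by
    have hpi : ENNReal.ofReal (2 * Real.pi) ≠ 0 := (ENNReal.ofReal_pos.2 Real.two_pi_pos).ne'
    simp [uniformAngle, -ENNReal.ofReal_mul, ENNReal.inv_mul_cancel hpi ENNReal.ofReal_ne_top]

theorem volume_inter_Ioc_eq_of_periodic {A : Set ℝ} (hA : MeasurableSet A) {T : ℝ} (hT : 0 < T)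
    (hper : Function.Periodic (· ∈ A) T) (a b : ℝ) :
    volume (A ∩ Set.Ioc a (a + T)) = volume (A ∩ Set.Ioc b (b + T)) := by
  refine (isAddFundamentalDomain_Ioc hT a).measure_set_eq (isAddFundamentalDomain_Ioc hT b) hA ?_
  rintro ⟨g, hg⟩
  obtain ⟨k, rfl⟩ := AddSubgroup.mem_zmultiples_iff.1 hg
  ext θ
  simpa [AddSubgroup.vadd_def, add_comm] using hper.zsmul k θ

theorem uniformAngle_preimage_add {A : Set ℝ} (hA : MeasurableSet A)
    (hper : Function.Periodic (· ∈ A) (2 * Real.pi)) (φ : ℝ) :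
    uniformAngle ((· + φ) ⁻¹' A) = uniformAngle A := by
  have huniform {B : Set ℝ} (hB : MeasurableSet B) : uniformAngle B =
      (ENNReal.ofReal (2 * Real.pi))⁻¹ * volume (B ∩ Set.Ioc 0 (0 + 2 * Real.pi)) := by
    rw [uniformAngle, ← Measure.restrict_congr_set Ioc_ae_eq_Icc, Measure.smul_apply,
      Measure.restrict_apply hB, smul_eq_mul, zero_add]
  have hshift : (· + φ) ⁻¹' A ∩ Set.Ioc 0 (0 + 2 * Real.pi) =
      (· + φ) ⁻¹' (A ∩ Set.Ioc φ (φ + 2 * Real.pi)) := by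
    rw [Set.preimage_inter, Set.preimage_add_const_Ioc, sub_self, zero_add, add_sub_cancel_left]
  rw [huniform (measurable_add_const φ hA), huniform hA, hshift, measure_preimage_add_right,
    volume_inter_Ioc_eq_of_periodic hA Real.two_pi_pos hper φ 0]

theorem map_uniformAngle_comp_add {X : Type*} [MeasurableSpace X] {f : ℝ → X} (hf : Measurable f)
    (hper : f.Periodic (2 * Real.pi)) (φ : ℝ) :
    (uniformAngle.map fun θ => f (θ + φ)) = uniformAngle.map f := by
  ext s hs
  have hshift : Measurable fun θ => f (θ + φ) := hf.comp (measurable_add_const φ)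
  rw [Measure.map_apply hshift hs, Measure.map_apply hf hs]
  exact uniformAngle_preimage_add (hf hs) (hper.comp (· ∈ s)) φ

theorem measurable_kacRot_mul (i j : Fin n) {X : Type*} [MeasurableSpace X] {f : X → ℝ}
    {g : X → Matrix (Fin n) (Fin n) ℝ} (hf : Measurable f) (hg : Measurable g) :
    Measurable fun a => kacRot i j (f a) * g a := by
  have hrot : Continuous fun z : ℝ × Matrix (Fin n) (Fin n) ℝ => kacRot i j z.1 :=
    (continuous_kacRot i j).comp continuous_fst
  have hcomp := (Continuous.matrix_mul hrot continuous_snd).measurable.comp (hf.prodMk hg)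
  exact hcomp

theorem map_uniformAngle_kacRot_mul_kacRot_mul (hij : i ≠ j) (φ : ℝ)
    (x : Matrix (Fin n) (Fin n) ℝ) :
    (uniformAngle.map fun θ => kacRot i j θ * (kacRot i j φ * x)) =
      uniformAngle.map fun θ => kacRot i j θ * x := by
  simp only [← Matrix.mul_assoc, kacRot_mul_kacRot hij]
  exact map_uniformAngle_comp_add (measurable_kacRot_mul i j measurable_id measurable_const)
    (fun θ => congrArg (· * x) (kacRot_add_two_pi i j θ)) φ

end UniformAngle

/-! ### The coupled Kac walk -/

section KacCoupling

variable {n : ℕ}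

theorem measurable_kacKernel : Measurable (kacKernel n) :=
  measurable_const_smul_sum _ _ fun p _ =>
    measurable_map_uncurry (measurable_kacRot_mul p.1 p.2 measurable_snd measurable_fst) _

/-- One step of two coupled Kac walks, from the two components of `z`. Both walks rotate the same
plane `p`, and the angle of the second one is shifted by `φ p z`. -/
def kacCoupling (φ : Fin n × Fin n → Matrix (Fin n) (Fin n) ℝ × Matrix (Fin n) (Fin n) ℝ → ℝ)
    (z : Matrix (Fin n) (Fin n) ℝ × Matrix (Fin n) (Fin n) ℝ) :
    Measure (Matrix (Fin n) (Fin n) ℝ × Matrix (Fin n) (Fin n) ℝ) :=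
  (n.choose 2 : ℝ≥0∞)⁻¹ • ∑ p ∈ pairs n, uniformAngle.map fun θ =>
    (kacRot p.1 p.2 θ * z.1, kacRot p.1 p.2 θ * (kacRot p.1 p.2 (φ p z) * z.2))

variable {φ : Fin n × Fin n → Matrix (Fin n) (Fin n) ℝ × Matrix (Fin n) (Fin n) ℝ → ℝ}

theorem measurable_kacCoupling (hφ : ∀ p ∈ pairs n, Measurable (φ p)) :
    Measurable (kacCoupling φ) := by
  refine measurable_const_smul_sum _ _ fun p hp => ?_
  have hrot {g : Matrix (Fin n) (Fin n) ℝ × Matrix (Fin n) (Fin n) ℝ → Matrix (Fin n) (Fin n) ℝ}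
      (hg : Measurable g) : Measurable
        fun w : (Matrix (Fin n) (Fin n) ℝ × Matrix (Fin n) (Fin n) ℝ) × ℝ =>
          kacRot p.1 p.2 w.2 * g w.1 :=
    measurable_kacRot_mul p.1 p.2 measurable_snd (hg.comp measurable_fst)
  exact measurable_map_uncurry ((hrot measurable_fst).prodMk
    (hrot (measurable_kacRot_mul p.1 p.2 (hφ p hp) measurable_snd))) uniformAngle

theorem isCoupling_kacCoupling (z : Matrix (Fin n) (Fin n) ℝ × Matrix (Fin n) (Fin n) ℝ) :
    IsCoupling (kacCoupling φ z) (kacKernel n z.1) (kacKernel n z.2) := by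
  refine IsCoupling.const_smul (IsCoupling.sum fun p hp => ?_) _
  rw [← map_uniformAngle_kacRot_mul_kacRot_mul (ne_of_mem_pairs hp) (φ p z) z.2]
  exact isCoupling_map_prodMk _ (measurable_kacRot_mul _ _ measurable_id measurable_const)
    (measurable_kacRot_mul _ _ measurable_id measurable_const)

theorem lintegral_DSO_kacCoupling_le (z : Matrix (Fin n) (Fin n) ℝ × Matrix (Fin n) (Fin n) ℝ) :
    ∫⁻ w, DSO n w.1 w.2 ^ (2 : ℝ) ∂kacCoupling φ z ≤ (n.choose 2 : ℝ≥0∞)⁻¹ *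
      ∑ p ∈ pairs n, DSO n z.1 (kacRot p.1 p.2 (φ p z) * z.2) ^ (2 : ℝ) := by
  rw [kacCoupling, lintegral_smul_measure, smul_eq_mul, lintegral_finsetSum_measure]
  gcongr with p hp
  have hrot (x : Matrix (Fin n) (Fin n) ℝ) : Measurable fun θ => kacRot p.1 p.2 θ * x :=
    measurable_kacRot_mul p.1 p.2 measurable_id measurable_const
  rw [lintegral_map (measurable_DSO.pow_const 2) ((hrot _).prodMk (hrot _))]
  calc ∫⁻ θ, DSO n (kacRot p.1 p.2 θ * z.1)
        (kacRot p.1 p.2 θ * (kacRot p.1 p.2 (φ p z) * z.2)) ^ (2 : ℝ) ∂uniformAngle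
      ≤ ∫⁻ _, DSO n z.1 (kacRot p.1 p.2 (φ p z) * z.2) ^ (2 : ℝ) ∂uniformAngle := by
        gcongr with θ
        exact DSO_mul_left_le (kacRot_mem_SO (ne_of_mem_pairs hp) θ)
    _ = DSO n z.1 (kacRot p.1 p.2 (φ p z) * z.2) ^ (2 : ℝ) := by simp

theorem exists_measurable_DSO_kacRot_mul_le {i j : Fin n} (hij : i ≠ j) {ε : ℝ≥0∞} (hε : ε ≠ 0) :
    ∃ φ : Matrix (Fin n) (Fin n) ℝ × Matrix (Fin n) (Fin n) ℝ → ℝ, Measurable φ ∧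
      ∀ z, DSO n z.1 (kacRot i j (φ z) * z.2) ^ (2 : ℝ) ≤ planeDist i j z.1 z.2 ^ (2 : ℝ) + ε := by
  have hmeas (θ : ℝ) : Measurable fun z : Matrix (Fin n) (Fin n) ℝ × Matrix (Fin n) (Fin n) ℝ =>
      DSO n z.1 (kacRot i j θ * z.2) ^ (2 : ℝ) :=
    (measurable_DSO.comp (measurable_fst.prodMk
      (measurable_kacRot_mul i j measurable_const measurable_snd))).pow_const 2
  have hcont (z : Matrix (Fin n) (Fin n) ℝ × Matrix (Fin n) (Fin n) ℝ) :
      Continuous fun θ => DSO n z.1 (kacRot i j θ * z.2) ^ (2 : ℝ) :=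
    ENNReal.continuous_rpow_const.comp (continuous_DSO_kacRot_mul hij z.1 z.2)
  obtain ⟨φ, hφ, hle⟩ := exists_measurable_le_iInf_add hmeas hcont hε
  refine ⟨φ, hφ, fun z => (hle z).trans_eq (congrArg (· + ε) ?_)⟩
  exact ((ENNReal.orderIsoRpow 2 two_pos).map_iInf _).symm

theorem natCast_inv_mul_ofReal_sub_one {N : ℕ} (hN : 0 < N) :
    (N : ℝ≥0∞)⁻¹ * ENNReal.ofReal (N - 1) = ENNReal.ofReal (1 - 1 / N) := by
  have hN' : (0 : ℝ) < N := by exact_mod_cast hN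
  rw [← ENNReal.ofReal_natCast, ← ENNReal.ofReal_inv_of_pos hN',
    ← ENNReal.ofReal_mul (by positivity)]
  congr 1
  field_simp

theorem kacDist_rpow_two_le (hn : 2 ≤ n) {x y : Matrix (Fin n) (Fin n) ℝ} (hx : x ∈ SO n)
    (hy : y ∈ SO n) :
    kacDist n x y ^ (2 : ℝ) ≤ ENNReal.ofReal (n.choose 2 - 1) * DSO n x y ^ (2 : ℝ) := by
  have hN : (1 : ℝ) ≤ n.choose 2 := by exact_mod_cast Nat.choose_pos hn
  calc kacDist n x y ^ (2 : ℝ)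
      ≤ (ENNReal.ofReal √(n.choose 2 - 1) * DSO n x y) ^ (2 : ℝ) := by
        gcongr
        exact kacDist_le_sqrt_mul_DSO hn hx hy
    _ = ENNReal.ofReal (n.choose 2 - 1) * DSO n x y ^ (2 : ℝ) := by
        rw [ENNReal.mul_rpow_of_nonneg _ _ zero_le_two,
          ENNReal.ofReal_rpow_of_nonneg (Real.sqrt_nonneg _) zero_le_two, Real.rpow_two,
          Real.sq_sqrt (sub_nonneg.2 hN)]

theorem exists_measurable_isCoupling_kacKernel (hn : 2 ≤ n) {ε : ℝ≥0∞} (hε : ε ≠ 0) :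
    ∃ κ : Matrix (Fin n) (Fin n) ℝ × Matrix (Fin n) (Fin n) ℝ →
        Measure (Matrix (Fin n) (Fin n) ℝ × Matrix (Fin n) (Fin n) ℝ),
      Measurable κ ∧ (∀ z, IsCoupling (κ z) (kacKernel n z.1) (kacKernel n z.2)) ∧
      ∀ z ∈ SO n ×ˢ SO n, ∫⁻ w, DSO n w.1 w.2 ^ (2 : ℝ) ∂κ z ≤
        ENNReal.ofReal (1 - 1 / n.choose 2) * DSO n z.1 z.2 ^ (2 : ℝ) + ε := by
  have hN : 0 < n.choose 2 := Nat.choose_pos hn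
  choose! φ hφ hle using fun (p : Fin n × Fin n) (hp : p ∈ pairs n) =>
    exists_measurable_DSO_kacRot_mul_le (ne_of_mem_pairs hp) hε
  refine ⟨kacCoupling φ, measurable_kacCoupling hφ, isCoupling_kacCoupling, fun z hz => ?_⟩
  calc ∫⁻ w, DSO n w.1 w.2 ^ (2 : ℝ) ∂kacCoupling φ z
      ≤ (n.choose 2 : ℝ≥0∞)⁻¹ *
          ∑ p ∈ pairs n, DSO n z.1 (kacRot p.1 p.2 (φ p z) * z.2) ^ (2 : ℝ) :=
        lintegral_DSO_kacCoupling_le z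
    _ ≤ (n.choose 2 : ℝ≥0∞)⁻¹ *
          ∑ p ∈ pairs n, (planeDist p.1 p.2 z.1 z.2 ^ (2 : ℝ) + ε) := by
        gcongr with p hp
        exact hle p hp z
    _ = (n.choose 2 : ℝ≥0∞)⁻¹ * kacDist n z.1 z.2 ^ (2 : ℝ) + ε := by
        rw [Finset.sum_add_distrib, Finset.sum_const, card_pairs, nsmul_eq_mul, mul_add,
          ← mul_assoc _ _ ε, ENNReal.inv_mul_cancel (by exact_mod_cast hN.ne')
          (ENNReal.natCast_ne_top _), one_mul, kacDist, one_div, ENNReal.rpow_inv_rpow two_ne_zero]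
    _ ≤ (n.choose 2 : ℝ≥0∞)⁻¹ *
          (ENNReal.ofReal (n.choose 2 - 1) * DSO n z.1 z.2 ^ (2 : ℝ)) + ε := by
        gcongr
        exact kacDist_rpow_two_le hn hz.1 hz.2
    _ = ENNReal.ofReal (1 - 1 / n.choose 2) * DSO n z.1 z.2 ^ (2 : ℝ) + ε := by
        rw [← mul_assoc, natCast_inv_mul_ofReal_sub_one hN]

end KacCoupling

/-- **Lemma 1.** For every `n ≥ 2`, Kac's random walk kernel `K` on `SO(n)` is
`√(1 - 1/C(n,2))`-Lipschitz in the `L²` Wasserstein metric for the intrinsic metric `D`: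
for all probability measures `μ, ν` on `SO(n)`,
`W_{D,2}(μK, νK) ≤ √(1 - 1/C(n,2)) · W_{D,2}(μ, ν)`. -/
theorem kac_walk_kernel_contracting (n : ℕ) (hn : 2 ≤ n)
    (μ ν : Measure (Matrix (Fin n) (Fin n) ℝ))
    (hμprob : IsProbabilityMeasure μ) (hνprob : IsProbabilityMeasure ν)
    (hμSO : μ (SO n)ᶜ = 0) (hνSO : ν (SO n)ᶜ = 0) :
    wassersteinE (DSO n) 2 (μ.bind (kacKernel n)) (ν.bind (kacKernel n)) ≤
      ENNReal.ofReal (Real.sqrt (1 - 1 / (n.choose 2 : ℝ))) *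
        wassersteinE (DSO n) 2 μ ν := by
  have hN : (1 : ℝ) ≤ n.choose 2 := by exact_mod_cast Nat.choose_pos hn
  have hnonneg : 0 ≤ 1 - 1 / (n.choose 2 : ℝ) :=
    sub_nonneg.2 (div_le_one_of_le₀ hN (by positivity))
  rw [Real.sqrt_eq_rpow, ← ENNReal.ofReal_rpow_of_nonneg hnonneg (by positivity)]
  exact wassersteinE_bind_le two_pos ENNReal.ofReal_ne_top measurable_kacKernel measurable_DSO
    (fun _ hε => exists_measurable_isCoupling_kacKernel hn hε) hμSO hνSO

end
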